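/- In the DaC model with p = 1/2, for every r ∈ (0,1) there is no percolation of black vertices, i.e. Θ(1/2, r) = 0, and moreover the mean size of the black r-cluster of the origin under ℙ_{1/2,r} is infinite. -/

import Mathlib

/-!
Common definitions for the Divide-and-Colour (DaC) model of
Bálint, Camia and Meester, "Sharp phase transition and critical
behaviour in 2D divide and colour models".

The model is built concretely: a single uniform random variable on `(0,1]`
is decomposed into countably many i.i.d. uniform random variables (via its
binary digits); one family of uniforms drives the Bernoulli(p) bond
percolation (the edge configuration), and an independent family of uniforms
attaches an independent Bernoulli(r) colour to each bond cluster (the colour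
of a cluster is determined by the uniform label of its canonical
representative, the vertex of minimal encoding).  The DaC measure
`ℙ_{p,r}` is the pushforward of Lebesgue measure on `(0,1]` under the map
producing the pair (edge configuration, colour configuration).
-/

open MeasureTheory ENNReal

namespace DaC

/-- Vertices of the lattice. -/
abbrev V : Type := ℤ × ℤ

/-- Square lattice adjacency: Euclidean distance `1`. -/
def SqAdj (u v : V) : Prop := (u.1 - v.1) ^ 2 + (u.2 - v.2) ^ 2 = 1

/-- `*`-adjacency (matching graph of the square lattice):
Euclidean distance `1` or `√2`. -/
def StarAdj (u v : V) : Prop :=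
  (u.1 - v.1) ^ 2 + (u.2 - v.2) ^ 2 = 1 ∨ (u.1 - v.1) ^ 2 + (u.2 - v.2) ^ 2 = 2

/-- Triangular lattice adjacency. -/
def TriAdj (u v : V) : Prop :=
  (u.1 - v.1, u.2 - v.2) ∈
    ({(1, 0), (-1, 0), (0, 1), (0, -1), (1, 1), (-1, -1)} : Set (ℤ × ℤ))

/-- Classical indicator of a proposition, as a boolean. -/
noncomputable def boolOf (P : Prop) : Bool := @decide P (Classical.propDecidable P)

/-- The `n`-th binary digit of a real number `x ∈ (0,1]`. -/
noncomputable def bit (n : ℕ) (x : ℝ) : Bool := boolOf (⌊x * 2 ^ (n + 1)⌋ % 2 = 1)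

/-- A countable family of i.i.d. uniform random variables on `[0,1]`, extracted
from a single uniform sample `x` by splitting its binary digits. -/
noncomputable def unif (i : ℕ) (x : ℝ) : ℝ :=
  ∑' k : ℕ, if bit (Nat.pair i k) x then ((2 : ℝ)⁻¹) ^ (k + 1) else 0

/-- A symmetric encoding of (unordered) pairs of vertices. -/
noncomputable def eIdx (u v : V) : ℕ :=
  min (Encodable.encode (u, v)) (Encodable.encode (v, u))

/-- The uniform label attached to the edge `{u,v}`. -/
noncomputable def edgeU (u v : V) (x : ℝ) : ℝ := unif (2 * eIdx u v) x

/-- The uniform label attached to the vertex `v` (independent of the edge labels). -/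
noncomputable def vtxU (v : V) (x : ℝ) : ℝ := unif (2 * Encodable.encode v + 1) x

/-- Edge configurations: a boolean (open/closed) for each (ordered) pair of
vertices; configurations arising from the model are symmetric and are
supported on pairs of adjacent vertices. -/
abbrev EdgeCfg : Type := V → V → Bool

/-- Colour configurations: a colour (black = `true`, white = `false`) for each vertex. -/
abbrev ColourCfg : Type := V → Bool

/-- Full configurations of the DaC model: an edge configuration together with
a colour configuration. -/
abbrev Config : Type := EdgeCfg × ColourCfg

/-- The Bernoulli(p) edge configuration determined by the uniform sample `x`,
on the lattice with adjacency `adj`: an edge `{u,v}` of the lattice is open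
iff its uniform label is `< p`. -/
noncomputable def edgeCfg (adj : V → V → Prop) (p : ℝ) (x : ℝ) : EdgeCfg :=
  fun u v => boolOf (adj u v) && boolOf (edgeU u v x < p)

/-- Connectivity through open edges of the edge configuration `η`. -/
def Conn (η : EdgeCfg) (u v : V) : Prop :=
  Relation.ReflTransGen (fun a b => η a b = true) u v

/-- The `p`-cluster of the vertex `v`: its connected component in the graph
retaining only open edges. -/
def pCluster (η : EdgeCfg) (v : V) : Set V := {w | Conn η v w}

/-- Canonical representative of the `p`-cluster of `v`: the vertex of the
cluster with minimal encoding. -/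
noncomputable def clusterRep (η : EdgeCfg) (v : V) : V :=
  (Encodable.decode (α := V) (sInf (Encodable.encode '' pCluster η v))).getD v

/-- The colour configuration with parameters `p, r` determined by the uniform
sample `x`: every `p`-cluster is coloured black (with probability `r`)
or white, independently of all other `p`-clusters, according to the uniform
label of its canonical representative. -/
noncomputable def colourCfg (adj : V → V → Prop) (p r : ℝ) (x : ℝ) : ColourCfg :=
  fun v => boolOf (vtxU (clusterRep (edgeCfg adj p x) v) x < r)

/-- The uniform sample: Lebesgue measure on `(0,1]`. -/
noncomputable def base : Measure ℝ := volume.restrict (Set.Ioc 0 1)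

/-- `ν_p`: the product Bernoulli(p) measure on edge configurations of the
lattice with adjacency `adj`. -/
noncomputable def edgeMeasure (adj : V → V → Prop) (p : ℝ) : Measure EdgeCfg :=
  base.map (edgeCfg adj p)

/-- `ℙ_{p,r}`: the DaC measure on pairs (edge configuration, colour
configuration) for the lattice with adjacency `adj`. -/
noncomputable def DaCMeasure (adj : V → V → Prop) (p r : ℝ) : Measure Config :=
  base.map (fun x => (edgeCfg adj p x, colourCfg adj p r x))

/-- Monochromatic connectivity: `u` and `v` are joined by a path (for the
adjacency `adj`) all of whose vertices have colour `c`. -/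
def MonoConn (adj : V → V → Prop) (ξ : ColourCfg) (c : Bool) (u v : V) : Prop :=
  Relation.ReflTransGen (fun a b => adj a b ∧ ξ a = c ∧ ξ b = c) u v

/-- The colour-`c` cluster of `v` (for the adjacency `adj`): empty if `v` does
not have colour `c`, and otherwise the maximal `adj`-connected set of
`c`-coloured vertices containing `v`. -/
def monoCluster (adj : V → V → Prop) (ξ : ColourCfg) (c : Bool) (v : V) : Set V :=
  {w | ξ v = c ∧ MonoConn adj ξ c v w}

/-- The origin. -/
def origin : V := (0, 0)

/-- The size (cardinality) of a set of vertices, with values in `ℝ≥0∞`. -/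
noncomputable def sizeE (S : Set V) : ℝ≥0∞ := S.encard

/-- The probability, under the DaC measure with edge adjacency `eadj` and
parameters `p, r`, that the origin lies in an infinite colour-`c` cluster for
the adjacency `cadj`. -/
noncomputable def percProb (eadj cadj : V → V → Prop) (c : Bool) (p r : ℝ) : ℝ≥0∞ :=
  DaCMeasure eadj p r {ω | (monoCluster cadj ω.2 c origin).Infinite}

/-- `Θ(p,r)` for the square lattice: probability that the origin lies in an
infinite black `r`-cluster. -/
noncomputable def thetaSq (p r : ℝ) : ℝ≥0∞ := percProb SqAdj SqAdj true p r

/-- `Θ*(p,s)` for the square lattice: the `ℙ_{p,1-s}`-probability that the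
origin lies in an infinite white `*`-cluster. -/
noncomputable def thetaStarSq (p s : ℝ) : ℝ≥0∞ := percProb SqAdj StarAdj false p (1 - s)

/-- `Θ(p,r)` for the triangular lattice. -/
noncomputable def thetaTri (p r : ℝ) : ℝ≥0∞ := percProb TriAdj TriAdj true p r

/-- The critical colouring density `r_c(p)` of the square lattice DaC model. -/
noncomputable def rcSq (p : ℝ) : ℝ :=
  sSup {r : ℝ | r ∈ Set.Icc (0 : ℝ) 1 ∧ thetaSq p r = 0}

/-- The critical colouring density `r_c*(p)` for white `*`-percolation. -/
noncomputable def rcStarSq (p : ℝ) : ℝ :=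
  sSup {s : ℝ | s ∈ Set.Icc (0 : ℝ) 1 ∧ thetaStarSq p s = 0}

/-- The critical colouring density `r_c(p)` of the triangular lattice DaC model. -/
noncomputable def rcTri (p : ℝ) : ℝ :=
  sSup {r : ℝ | r ∈ Set.Icc (0 : ℝ) 1 ∧ thetaTri p r = 0}

/-! ### Rectangles and crossings -/

/-- The rectangle `S_{n,m} = ([0,n] × [0,m]) ∩ ℤ²`. -/
def Rect (n m : ℕ) : Set V :=
  {v | 0 ≤ v.1 ∧ v.1 ≤ (n : ℤ) ∧ 0 ≤ v.2 ∧ v.2 ≤ (m : ℤ)}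

/-- The top side of `S_{n,m}`. -/
def TopSide (n m : ℕ) : Set V := {v | v ∈ Rect n m ∧ v.2 = (m : ℤ)}

/-- The bottom side of `S_{n,m}`. -/
def BotSide (n m : ℕ) : Set V := {v | v ∈ Rect n m ∧ v.2 = 0}

/-- The left side of `S_{n,m}`. -/
def LeftSide (n m : ℕ) : Set V := {v | v ∈ Rect n m ∧ v.1 = 0}

/-- The right side of `S_{n,m}`. -/
def RightSide (n m : ℕ) : Set V := {v | v ∈ Rect n m ∧ v.1 = (n : ℤ)}

/-- There is a path (for the adjacency `adj`), all of whose vertices lie in the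
region `R` and satisfy the predicate `good`, from the set `A` to the set `B`. -/
def HasCrossing (adj : V → V → Prop) (good : V → Prop) (R A B : Set V) : Prop :=
  ∃ (k : ℕ) (f : Fin (k + 1) → V),
    (∀ i, f i ∈ R ∧ good (f i)) ∧
    (∀ i : Fin k, adj (f i.castSucc) (f i.succ)) ∧
    f 0 ∈ A ∧ f (Fin.last k) ∈ B

/-- `V^b_{n,m}` as a set of colour configurations: there is a black vertical
crossing of `S_{n,m}` (for the adjacency `adj`). -/
def VertBC (adj : V → V → Prop) (n m : ℕ) : Set ColourCfg :=
  {ξ | HasCrossing adj (fun v => ξ v = true) (Rect n m) (TopSide n m) (BotSide n m)}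

/-- `V^{w*}_{n,m}` as a set of colour configurations: there is a white vertical
`*`-crossing of `S_{n,m}`. -/
def VertWStarC (n m : ℕ) : Set ColourCfg :=
  {ξ | HasCrossing StarAdj (fun v => ξ v = false) (Rect n m) (TopSide n m) (BotSide n m)}

/-- `H^{w*}_{n,m}` as a set of colour configurations: there is a white
horizontal `*`-crossing of `S_{n,m}`. -/
def HorizWStarC (n m : ℕ) : Set ColourCfg :=
  {ξ | HasCrossing StarAdj (fun v => ξ v = false) (Rect n m) (LeftSide n m) (RightSide n m)}

/-- The event (set of full configurations) determined by a set of colour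
configurations. -/
def colourEvent (C : Set ColourCfg) : Set Config := {ω | ω.2 ∈ C}

/-! ### Events depending on colours, increasing events, pivotal clusters -/

/-- The event `A` is defined in terms of the colours of the vertices in `W`. -/
def DependsOnColoursIn (A : Set Config) (W : Set V) : Prop :=
  ∀ ω ω' : Config, (∀ v ∈ W, ω.2 v = ω'.2 v) → (ω ∈ A ↔ ω' ∈ A)

/-- The event `A` is increasing (for the partial order comparing colour
configurations pointwise, black = `true` above white = `false`). -/
def IncreasingColourEvent (A : Set Config) : Prop :=
  ∀ ω ω' : Config, (∀ v : V, ω.2 v = true → ω'.2 v = true) → ω ∈ A → ω' ∈ A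

/-- Flip the colours of the vertices of `C`. -/
noncomputable def flipOn (C : Set V) (ξ : ColourCfg) : ColourCfg :=
  fun v => @ite _ (v ∈ C) (Classical.propDecidable _) (!ξ v) (ξ v)

/-- The set `C` is a pivotal `p`-cluster for the event `A` in the
configuration `ω`: `C` is a `p`-cluster of the edge configuration of `ω`, and
flipping the colour of (all the vertices of) `C` changes whether the
configuration belongs to `A`. -/
def IsPivotal (A : Set Config) (ω : Config) (C : Set V) : Prop :=
  (∃ v : V, C = pCluster ω.1 v) ∧ ¬ (ω ∈ A ↔ (ω.1, flipOn C ω.2) ∈ A)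

/-- `n(A)`: the number of pivotal `p`-clusters for the event `A`, with values
in `ℝ≥0∞`. -/
noncomputable def numPivotal (A : Set Config) (ω : Config) : ℝ≥0∞ :=
  {C : Set V | IsPivotal A ω C}.encard

/-! ### Barriers -/

/-- Connectivity in the square lattice avoiding the edges of `E`. -/
def AvoidConn (E : Set (V × V)) (u v : V) : Prop :=
  Relation.ReflTransGen (fun a b => SqAdj a b ∧ (a, b) ∉ E ∧ (b, a) ∉ E) u v

/-- `E` is a barrier: a set of edges of the square lattice whose removal
(keeping the end-vertices) separates `ℤ²` into two or more connected
components, exactly one of which is infinite. -/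
def IsBarrier (E : Set (V × V)) : Prop :=
  (∀ e ∈ E, SqAdj e.1 e.2) ∧
  (∃ v, {w | AvoidConn E v w}.Infinite) ∧
  (∀ v w, {x | AvoidConn E v x}.Infinite → {x | AvoidConn E w x}.Infinite → AvoidConn E v w) ∧
  (∃ v, {w | AvoidConn E v w}.Finite)

/-- The exterior of a barrier: its unique infinite complementary component. -/
def barrierExt (E : Set (V × V)) : Set V := {v | {w | AvoidConn E v w}.Infinite}

/-- The interior of a barrier: the union of the finite complementary components. -/
def barrierInt (E : Set (V × V)) : Set V := {v | {w | AvoidConn E v w}.Finite}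

/-- The event `A ⊆ EdgeCfg` is increasing (opening edges preserves it). -/
def IncreasingEdgeEvent (A : Set EdgeCfg) : Prop :=
  ∀ η η' : EdgeCfg, (∀ a b : V, η a b = true → η' a b = true) → η ∈ A → η' ∈ A

/-- The event `A ⊆ EdgeCfg` depends only on the states of the edges both of
whose endpoints lie in `W`. -/
def DependsOnEdgesIn (A : Set EdgeCfg) (W : Set V) : Prop :=
  ∀ η η' : EdgeCfg, (∀ a b : V, a ∈ W → b ∈ W → η a b = η' a b) → (η ∈ A ↔ η' ∈ A)

/-! ### Translations -/

/-- Translation of configurations by the vector `u`. -/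
def shift (u : V) (ω : Config) : Config :=
  (fun a b => ω.1 (a + u) (b + u), fun a => ω.2 (a + u))

end DaC

/-!
Critical bond percolation is self-dual: a square is crossed from left to right by open edges unless
it is crossed from bottom to top by dual edges, so it is crossed with probability at least `1 / 2`.
Gluing crossings with Harris' inequality and a reflection argument gives the theorem of Russo,
Seymour and Welsh: rectangles of a fixed shape are crossed with probability bounded below. Hence
there are almost surely infinitely many open circuits around the origin and, by duality, infinitely
many dual circuits separating them, so that the open circuits run through infinitely many clusters.
An infinite black cluster of the origin would meet all of these, so all of them would have been
coloured black; this has probability `0`.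

On the other hand a square of side `n` is crossed from one of `n + 1` points, so the origin is
connected to distance `n` with probability at least of order `1 / n`. Hence the mean size of the
open cluster of the origin is infinite, and with probability `r` that whole cluster is black.
-/

namespace DaC

/-- Edges of the square lattice, each occurring once: `(x, y, false)` joins `(x, y)` to
`(x + 1, y)` and `(x, y, true)` joins `(x, y)` to `(x, y + 1)`. -/
abbrev Edge : Type := ℤ × ℤ × Bool

/-- The left or lower end of an edge. -/
def src (e : Edge) : V := (e.1, e.2.1)

/-- The right or upper end of an edge. -/
def tgt (e : Edge) : V := if e.2.2 then (e.1, e.2.1 + 1) else (e.1 + 1, e.2.1)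

/-- The unordered pair of ends of an edge. -/
def ends (e : Edge) : Sym2 V := s(src e, tgt e)

@[simp] lemma src_mk (x y : ℤ) (b : Bool) : src (x, y, b) = (x, y) := rfl

@[simp] lemma tgt_mk_false (x y : ℤ) : tgt (x, y, false) = (x + 1, y) := rfl

@[simp] lemma tgt_mk_true (x y : ℤ) : tgt (x, y, true) = (x, y + 1) := rfl

/-- Adjacency through an edge of `O`. Sets of edges stand for configurations, namely the set of
open edges. -/
def EdgeAdj (O : Set Edge) (u v : V) : Prop := ∃ e ∈ O, ends e = s(u, v)

/-- Connectivity by paths of edges of `O`. -/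
def Reach (O : Set Edge) : V → V → Prop := Relation.ReflTransGen (EdgeAdj O)

section Reach

variable {O O' : Set Edge} {u v w : V}

instance (O : Set Edge) : Std.Symm (EdgeAdj O) where
  symm _ _ := fun ⟨e, he, huv⟩ ↦ ⟨e, he, huv.trans Sym2.eq_swap⟩

lemma Reach.refl (O : Set Edge) (u : V) : Reach O u u := Relation.ReflTransGen.refl

lemma Reach.trans (h : Reach O u v) (h' : Reach O v w) : Reach O u w :=
  Relation.ReflTransGen.trans h h'

lemma Reach.symm (h : Reach O u v) : Reach O v u :=
  Relation.ReflTransGen.stdSymm.symm _ _ h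

lemma Reach.of_mem {e : Edge} (he : e ∈ O) : Reach O (src e) (tgt e) :=
  .single ⟨e, he, rfl⟩

lemma Reach.map (h : Reach O u v) {g : V → V} {σ : Edge → Edge}
    (hσ : ∀ e, ends (σ e) = (ends e).map g) (hO : ∀ e ∈ O, σ e ∈ O') :
    Reach O' (g u) (g v) :=
  h.lift g fun _ _ ⟨e, he, hab⟩ ↦ ⟨σ e, hO e he, by rw [hσ, hab, Sym2.map_mk]⟩

lemma Reach.mono (h : Reach O u v) (hO : O ⊆ O') : Reach O' u v :=
  Relation.ReflTransGen.mono (fun _ _ ⟨e, he, hab⟩ ↦ ⟨e, hO he, hab⟩) u v h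

end Reach

/-- The set of vertices connected to `S` by paths of edges of `F`. -/
def reachSet (F : Set Edge) (S : Set V) : Set V := {f | ∃ u ∈ S, Reach F u f}

section reachSet

variable {F F' : Set Edge} {S L : Set V}

lemma subset_reachSet (F : Set Edge) (S : Set V) : S ⊆ reachSet F S :=
  fun u hu ↦ ⟨u, hu, .refl F u⟩

lemma src_mem_reachSet_iff {e : Edge} (he : e ∈ F) :
    src e ∈ reachSet F S ↔ tgt e ∈ reachSet F S :=
  ⟨fun ⟨u, hu, h⟩ ↦ ⟨u, hu, h.trans (.of_mem he)⟩,
    fun ⟨u, hu, h⟩ ↦ ⟨u, hu, h.trans (Reach.of_mem he).symm⟩⟩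

lemma Reach.mem_of_mem {u v : V} (h : Reach F u v) (hL : ∀ e ∈ F, (src e ∈ L ↔ tgt e ∈ L))
    (hu : u ∈ L) : v ∈ L := by
  induction h with
  | refl => exact hu
  | tail _ hbc ih =>
    obtain ⟨e, he, hbc⟩ := hbc
    rcases Sym2.eq_iff.1 hbc with ⟨rfl, rfl⟩ | ⟨rfl, rfl⟩
    · exact (hL e he).1 ih
    · exact (hL e he).2 ih

lemma reachSet_subset (hS : S ⊆ L) (hL : ∀ e ∈ F, (src e ∈ L ↔ tgt e ∈ L)) :
    reachSet F S ⊆ L :=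
  fun _ ⟨_, hu, h⟩ ↦ h.mem_of_mem hL (hS hu)

lemma reachSet_congr
    (h : ∀ e, src e ∈ reachSet F S ∨ tgt e ∈ reachSet F S → (e ∈ F ↔ e ∈ F')) :
    reachSet F' S = reachSet F S := by
  have hsub : reachSet F' S ⊆ reachSet F S :=
    reachSet_subset (subset_reachSet F S) fun e he ↦ by
      by_cases h' : src e ∈ reachSet F S ∨ tgt e ∈ reachSet F S
      · exact src_mem_reachSet_iff ((h e h').2 he)
      · exact iff_of_false (fun hs ↦ h' (.inl hs)) (fun ht ↦ h' (.inr ht))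
  refine hsub.antisymm (reachSet_subset (subset_reachSet F' S) fun e he ↦ ?_)
  by_cases h' : src e ∈ reachSet F' S ∨ tgt e ∈ reachSet F' S
  · exact src_mem_reachSet_iff ((h e (h'.imp (@hsub _) (@hsub _))).1 he)
  · exact iff_of_false (fun hs ↦ h' (.inl hs)) (fun ht ↦ h' (.inr ht))

end reachSet

/-- The edges with both ends in `B`. -/
def edgesIn (B : Set V) : Set Edge := {e | ∀ v ∈ ends e, v ∈ B}

lemma mem_edgesIn {B : Set V} {e : Edge} : e ∈ edgesIn B ↔ src e ∈ B ∧ tgt e ∈ B := Sym2.ball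

lemma edgesIn_mono {B B' : Set V} (h : B ⊆ B') : edgesIn B ⊆ edgesIn B' :=
  fun _ he v hv ↦ h (he v hv)

lemma Reach.mem_of_edgesIn {O : Set Edge} {B : Set V} {u v : V} (h : Reach (O ∩ edgesIn B) u v)
    (hu : u ∈ B) : v ∈ B :=
  h.mem_of_mem (fun _ he ↦ iff_of_true (mem_edgesIn.1 he.2).1 (mem_edgesIn.1 he.2).2) hu

lemma EdgeAdj.map_edgesIn {O : Set Edge} {B B' : Set V} {u v : V} {g : V → V} {σ : Edge → Edge}
    (h : EdgeAdj (σ ⁻¹' O ∩ edgesIn B) u v) (hσ : ∀ e, ends (σ e) = (ends e).map g)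
    (hB : Set.MapsTo g B B') : EdgeAdj (O ∩ edgesIn B') (g u) (g v) := by
  obtain ⟨e, he, huv⟩ := h
  refine ⟨σ e, ⟨he.1, fun w hw ↦ ?_⟩, by rw [hσ, huv, Sym2.map_mk]⟩
  rw [hσ, Sym2.mem_map] at hw
  obtain ⟨a, ha, rfl⟩ := hw
  exact hB (he.2 a ha)

lemma Reach.map_edgesIn {O : Set Edge} {B B' : Set V} {u v : V} {g : V → V} {σ : Edge → Edge}
    (h : Reach (σ ⁻¹' O ∩ edgesIn B) u v) (hσ : ∀ e, ends (σ e) = (ends e).map g)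
    (hB : Set.MapsTo g B B') : Reach (O ∩ edgesIn B') (g u) (g v) :=
  h.lift g fun _ _ h ↦ h.map_edgesIn hσ hB

/-- The rectangle of lattice points `[x₀, x₁] × [y₀, y₁]`. -/
def box (x₀ x₁ y₀ y₁ : ℤ) : Set V := Set.Icc x₀ x₁ ×ˢ Set.Icc y₀ y₁

lemma mem_box {x₀ x₁ y₀ y₁ : ℤ} {v : V} :
    v ∈ box x₀ x₁ y₀ y₁ ↔ (x₀ ≤ v.1 ∧ v.1 ≤ x₁) ∧ y₀ ≤ v.2 ∧ v.2 ≤ y₁ := Iff.rfl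

lemma box_subset_box {x₀ x₁ y₀ y₁ x₀' x₁' y₀' y₁' : ℤ} (h₁ : x₀' ≤ x₀) (h₂ : x₁ ≤ x₁')
    (h₃ : y₀' ≤ y₀) (h₄ : y₁ ≤ y₁') : box x₀ x₁ y₀ y₁ ⊆ box x₀' x₁' y₀' y₁' :=
  Set.prod_mono (Set.Icc_subset_Icc h₁ h₂) (Set.Icc_subset_Icc h₃ h₄)

/-- Planar duality. A face of the lattice is named by its lower left corner, so that `V` is also
the set of faces and `Edge` the set of pairs of faces sharing a side; `dualEdge e` is the side
shared by the faces `src e` and `tgt e`. -/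
def dualEdge : Edge ≃ Edge where
  toFun e := if e.2.2 then (e.1, e.2.1 + 1, false) else (e.1 + 1, e.2.1, true)
  invFun e := if e.2.2 then (e.1 - 1, e.2.1, false) else (e.1, e.2.1 - 1, true)
  left_inv := by rintro ⟨x, y, _ | _⟩ <;> simp
  right_inv := by rintro ⟨x, y, _ | _⟩ <;> simp

@[simp] lemma dualEdge_mk_false (x y : ℤ) : dualEdge (x, y, false) = (x + 1, y, true) := rfl

@[simp] lemma dualEdge_mk_true (x y : ℤ) : dualEdge (x, y, true) = (x, y + 1, false) := rfl

@[simp] lemma dualEdge_symm_mk_false (x y : ℤ) :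
    dualEdge.symm (x, y, false) = (x, y - 1, true) := rfl

@[simp] lemma dualEdge_symm_mk_true (x y : ℤ) :
    dualEdge.symm (x, y, true) = (x - 1, y, false) := rfl

/-- The dual configuration, on the faces: a dual edge is open when the edge it crosses is not. -/
def dualConfig (O : Set Edge) : Set Edge := {e | dualEdge e ∉ O}

/-- The edges separating a face of `L` from a face of the complement of `L`, among the pairs of
adjacent faces lying in the rows of `I`. -/
def cutEdges (I : Set ℤ) (L : Set V) : Set Edge :=
  dualEdge '' {e | (src e).2 ∈ I ∧ (tgt e).2 ∈ I ∧ ¬(src e ∈ L ↔ tgt e ∈ L)}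

section cutEdges

variable {I : Set ℤ} {L : Set V}

lemma dualEdge_mem_cutEdges {e : Edge} :
    dualEdge e ∈ cutEdges I L ↔
      (src e).2 ∈ I ∧ (tgt e).2 ∈ I ∧ ¬(src e ∈ L ↔ tgt e ∈ L) :=
  dualEdge.injective.mem_set_image

lemma mk_false_mem_cutEdges {x y : ℤ} :
    (x, y, false) ∈ cutEdges I L ↔ y - 1 ∈ I ∧ y ∈ I ∧ ¬((x, y - 1) ∈ L ↔ (x, y) ∈ L) := by
  rw [← dualEdge.apply_symm_apply (x, y, false), dualEdge_mem_cutEdges]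
  simp

lemma mk_true_mem_cutEdges {x y : ℤ} :
    (x, y, true) ∈ cutEdges I L ↔ y ∈ I ∧ ¬((x - 1, y) ∈ L ↔ (x, y) ∈ L) := by
  rw [← dualEdge.apply_symm_apply (x, y, true), dualEdge_mem_cutEdges]
  simp

end cutEdges

/-! ### Chains modulo two -/

/-- The boundary of a chain of edges modulo two. -/
def boundary (c : Edge → ZMod 2) (v : V) : ZMod 2 :=
  c (v.1, v.2, false) + c (v.1 - 1, v.2, false) + c (v.1, v.2, true) + c (v.1, v.2 - 1, true)

lemma boundary_add (c c' : Edge → ZMod 2) : boundary (c + c') = boundary c + boundary c' := by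
  funext v
  simp only [boundary, Pi.add_apply]
  ring

lemma boundary_single (e : Edge) :
    boundary (Pi.single e 1) = Pi.single (src e) 1 + Pi.single (tgt e) 1 := by
  funext v
  obtain ⟨x, y, _ | _⟩ := e <;> obtain ⟨p, q⟩ := v <;>
    simp [boundary, Pi.single_apply, sub_eq_iff_eq_add]

lemma exists_boundary_eq {O : Set Edge} {u v : V} (h : Reach O u v) :
    ∃ c : Edge → ZMod 2, (∀ e ∉ O, c e = 0) ∧ boundary c = Pi.single u 1 + Pi.single v 1 := by
  induction h with
  | refl => exact ⟨0, fun _ _ ↦ rfl, by rw [CharTwo.add_self_eq_zero]; funext; simp [boundary]⟩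
  | @tail b d _ hbd ih =>
    obtain ⟨c, hc, hbound⟩ := ih
    obtain ⟨e, he, hbd⟩ := hbd
    refine ⟨c + Pi.single e 1, fun e' he' ↦ ?_, ?_⟩
    · rw [Pi.add_apply, hc e' he', Pi.single_eq_of_ne (ne_of_mem_of_not_mem he he').symm, add_zero]
    · have hends : (Pi.single (src e) 1 + Pi.single (tgt e) 1 : V → ZMod 2)
          = Pi.single b 1 + Pi.single d 1 := by
        rcases Sym2.eq_iff.1 hbd with ⟨h₁, h₂⟩ | ⟨h₁, h₂⟩
        · rw [h₁, h₂]
        · rw [h₁, h₂, add_comm]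
      rw [boundary_add, boundary_single, hbound, hends, add_assoc,
        CharTwo.add_cancel_left]

lemma sum_Icc_sub_one_add (g : ℤ → ZMod 2) {a b : ℤ} (h : a - 1 ≤ b) :
    ∑ x ∈ Finset.Icc a b, (g (x - 1) + g x) = g (a - 1) + g b := by
  induction b, h using Int.leInduction with
  | base => simp [CharTwo.add_self_eq_zero]
  | succ n hn ih =>
    rw [← Finset.insert_Icc_right_eq_Icc_add_one (by omega), Finset.sum_insert (by simp), ih]
    simp only [add_sub_cancel_right]
    linear_combination CharTwo.add_self_eq_zero (g n)

/-- The flux of a chain through the row of faces at height `y`, between the columns `a` and `b`. -/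
noncomputable def flux (c : Edge → ZMod 2) (a b y : ℤ) : ZMod 2 :=
  ∑ x ∈ Finset.Icc a b, c (x, y, true)

lemma flux_of_lt (c : Edge → ZMod 2) {a b : ℤ} (h : b < a) (y : ℤ) : flux c a b y = 0 := by
  rw [flux, Finset.Icc_eq_empty_of_lt h, Finset.sum_empty]

lemma sum_boundary_row (c : Edge → ZMod 2) {a b : ℤ} (h : a - 1 ≤ b) (y : ℤ) :
    ∑ x ∈ Finset.Icc a b, boundary c (x, y) =
      c (a - 1, y, false) + c (b, y, false) + (flux c a b y + flux c a b (y - 1)) := by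
  rw [← sum_Icc_sub_one_add (fun x ↦ c (x, y, false)) h, flux, flux, ← Finset.sum_add_distrib,
    ← Finset.sum_add_distrib]
  exact Finset.sum_congr rfl fun x _ ↦ by simp only [boundary]; ring

lemma flux_eq_flux_bottom {c : Edge → ZMod 2} {a b y₀ y₁ : ℤ} (hab : a - 1 ≤ b)
    (hc : ∀ x ∈ Finset.Icc a b, ∀ y ∈ Set.Ioo y₀ y₁, boundary c (x, y) = 0)
    (hl : ∀ y ∈ Set.Ioo y₀ y₁, c (a - 1, y, false) = 0)
    (hr : ∀ y ∈ Set.Ioo y₀ y₁, c (b, y, false) = 0) {y : ℤ} (hy : y ∈ Set.Ico y₀ y₁) :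
    flux c a b y = flux c a b y₀ := by
  obtain ⟨hy₀, hy₁⟩ := hy
  induction y, hy₀ using Int.leInduction with
  | base => rfl
  | succ n hn ih =>
    have hmem : n + 1 ∈ Set.Ioo y₀ y₁ := ⟨by omega, hy₁⟩
    have hrow := sum_boundary_row c hab (n + 1)
    rw [Finset.sum_eq_zero fun x hx ↦ hc x hx _ hmem, hl _ hmem, hr _ hmem,
      add_sub_cancel_right, add_zero, zero_add] at hrow
    rw [CharTwo.add_eq_zero.1 hrow.symm, ih (by omega)]

section exists_cut

variable {x₀ x₁ y₀ y₁ : ℤ} {c : Edge → ZMod 2} {u t : V}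

lemma flux_eq_one (hc : ∀ e ∉ edgesIn (box x₀ x₁ y₀ y₁), c e = 0)
    (hbound : boundary c = Pi.single u 1 + Pi.single t 1) (hu : u.1 ∈ Set.Icc x₀ x₁)
    (hu₀ : u.2 = y₀) (ht₁ : t.2 = y₁) {f : V} (hx : x₁ ≤ f.1) (hy : f.2 ∈ Set.Ico y₀ y₁) :
    flux c x₀ f.1 f.2 = 1 := by
  have hab : x₀ - 1 ≤ f.1 := by have := hu.1.trans hu.2; omega
  have hy' : y₀ < y₁ := hy.1.trans_lt hy.2
  have hl (y : ℤ) : c (x₀ - 1, y, false) = 0 :=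
    hc _ fun h ↦ by have := (mem_edgesIn.1 h).1.1.1; simp at this
  have hr (y : ℤ) : c (f.1, y, false) = 0 :=
    hc _ fun h ↦ by have := (mem_edgesIn.1 h).2.1.2; simp only [tgt_mk_false] at this; omega
  have hd (x : ℤ) : c (x, y₀ - 1, true) = 0 :=
    hc _ fun h ↦ by have := (mem_edgesIn.1 h).1.2.1; simp at this
  have hbottom : ∑ x ∈ Finset.Icc x₀ f.1, boundary c (x, y₀) = 1 := by
    rw [hbound, Finset.sum_eq_single u.1]
    · simp [Pi.single_apply, Prod.ext_iff, hu₀, ht₁, hy'.ne]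
    · intro x _ hxu
      simp [Prod.ext_iff, hxu, ht₁, hy'.ne]
    · exact fun h ↦ absurd (Finset.mem_Icc.2 ⟨hu.1, hu.2.trans hx⟩) h
  rw [sum_boundary_row c hab, hl, hr, flux.eq_def c x₀ f.1 (y₀ - 1),
    Finset.sum_eq_zero fun x _ ↦ hd x, add_zero, zero_add, add_zero] at hbottom
  rw [flux_eq_flux_bottom hab (fun x _ y hy ↦ ?_) (fun _ _ ↦ hl _) (fun _ _ ↦ hr _) hy, hbottom]
  simp [hbound, Prod.ext_iff, hu₀, ht₁, hy.1.ne', hy.2.ne]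

lemma flux_src_add_flux_tgt (hc : ∀ e ∉ edgesIn (box x₀ x₁ y₀ y₁), c e = 0)
    (hbound : boundary c = Pi.single u 1 + Pi.single t 1) (hu₀ : u.2 = y₀) (ht₁ : t.2 = y₁)
    {e : Edge} (hs : (src e).2 ∈ Set.Ico y₀ y₁) (ht : (tgt e).2 ∈ Set.Ico y₀ y₁) :
    flux c x₀ (src e).1 (src e).2 + flux c x₀ (tgt e).1 (tgt e).2 = c (dualEdge e) := by
  have hout (x y : ℤ) (b : Bool) (hx : x < x₀) : c (x, y, b) = 0 :=
    hc _ fun h ↦ hx.not_ge (mem_edgesIn.1 h).1.1.1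
  obtain ⟨x, y, _ | _⟩ := e
  · simp only [src_mk, tgt_mk_false, dualEdge_mk_false] at *
    rcases lt_or_ge (x + 1) x₀ with hx | hx
    · rw [flux_of_lt c hx, flux_of_lt c (by omega), hout _ _ _ hx, add_zero]
    · rw [flux, flux, ← Finset.insert_Icc_right_eq_Icc_add_one hx, Finset.sum_insert (by simp),
        add_left_comm, CharTwo.add_self_eq_zero, add_zero]
  · simp only [src_mk, tgt_mk_true, dualEdge_mk_true] at *
    rcases lt_or_ge x x₀ with hx | hx
    · rw [flux_of_lt c hx, flux_of_lt c hx, hout _ _ _ hx, add_zero]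
    · have hrow := sum_boundary_row c (a := x₀) (b := x) (by omega) (y + 1)
      rw [hout _ _ _ (by omega), zero_add, add_sub_cancel_right, Finset.sum_eq_zero] at hrow
      · rw [add_comm, ← CharTwo.add_eq_zero.1 hrow.symm]
      · intro i _
        have h₀ : y + 1 ≠ y₀ := by have := hs.1; omega
        simp [hbound, Prod.ext_iff, hu₀, ht₁, h₀, ht.2.ne]

/-- The faces separated from the left side by an even number of edges of the path form `L`. -/
lemma exists_cut {O : Set Edge} (hO : O ⊆ edgesIn (box x₀ x₁ y₀ y₁)) (h : Reach O u t)
    (hu : u.1 ∈ Set.Icc x₀ x₁) (hu₀ : u.2 = y₀) (ht₁ : t.2 = y₁) :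
    ∃ L : Set V, (∀ f : V, f.1 < x₀ → f ∈ L) ∧
      (∀ f : V, x₁ ≤ f.1 → f.2 ∈ Set.Ico y₀ y₁ → f ∉ L) ∧
      cutEdges (Set.Ico y₀ y₁) L ⊆ O := by
  obtain ⟨c, hcO, hbound⟩ := exists_boundary_eq h
  have hc : ∀ e ∉ edgesIn (box x₀ x₁ y₀ y₁), c e = 0 := fun e he ↦ hcO e fun h' ↦ he (hO h')
  refine ⟨{f | flux c x₀ f.1 f.2 = 0}, fun f hf ↦ flux_of_lt c hf _, fun f hf hfy ↦ ?_, ?_⟩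
  · simp [flux_eq_one hc hbound hu hu₀ ht₁ hf hfy]
  · rintro _ ⟨e, ⟨hs, ht, hne⟩, rfl⟩
    by_contra he
    have hsum := flux_src_add_flux_tgt hc hbound hu₀ ht₁ hs ht
    rw [hcO _ he, CharTwo.add_eq_zero] at hsum
    exact hne (by simp only [Set.mem_ofPred_eq, hsum])

end exists_cut

/-- The chain of the edges separating `A` from its complement. -/
noncomputable def coboundary (A : Set V) (e : Edge) : ZMod 2 :=
  A.indicator 1 (src (dualEdge.symm e)) + A.indicator 1 (tgt (dualEdge.symm e))

section exists_boundary_path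

lemma indicator_add_indicator_eq_zero {A : Set V} {f g : V} (h : f ∈ A ↔ g ∈ A) :
    A.indicator (1 : V → ZMod 2) f + A.indicator 1 g = 0 := by
  rw [CharTwo.add_eq_zero]
  by_cases hf : f ∈ A
  · simp [hf, h.1 hf]
  · simp [hf, mt h.2 hf]

lemma boundary_coboundary (A : Set V) : boundary (coboundary A) = 0 := by
  funext v
  simp only [boundary, coboundary, dualEdge_symm_mk_false, dualEdge_symm_mk_true, src_mk,
    tgt_mk_false, tgt_mk_true, sub_add_cancel, Pi.zero_apply]
  ring_nf
  simp [CharTwo.two_eq_zero]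

lemma flux_coboundary {A : Set V} {a b y : ℤ} (h : a - 1 ≤ b) (ha : (a - 1, y) ∈ A)
    (hb : (b, y) ∉ A) : flux (coboundary A) a b y = 1 := by
  simp only [flux, coboundary, dualEdge_symm_mk_true, src_mk, tgt_mk_false, sub_add_cancel]
  rw [sum_Icc_sub_one_add (fun x ↦ A.indicator 1 (x, y)) h]
  simp [ha, hb]

lemma coboundary_eq_zero_of_notMem_cutEdges {A : Set V} {I : Set ℤ} {e : Edge}
    (hs : (src (dualEdge.symm e)).2 ∈ I) (ht : (tgt (dualEdge.symm e)).2 ∈ I)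
    (he : e ∉ cutEdges I A) : coboundary A e = 0 := by
  rw [← dualEdge.apply_symm_apply e, dualEdge_mem_cutEdges] at he
  exact indicator_add_indicator_eq_zero (not_not.1 fun h ↦ he ⟨hs, ht, h⟩)

lemma boundary_indicator_mul_coboundary {A K : Set V} {I : Set ℤ}
    (hK : ∀ e ∈ cutEdges I A, (src e ∈ K ↔ tgt e ∈ K)) {v : V} (hv : v.2 ∈ I)
    (hv' : v.2 - 1 ∈ I) :
    boundary (fun e ↦ K.indicator 1 (src e) * coboundary A e) v = 0 := by
  have hflip {e : Edge} (hs : (src (dualEdge.symm e)).2 ∈ I) (ht : (tgt (dualEdge.symm e)).2 ∈ I) :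
      K.indicator 1 (src e) * coboundary A e = K.indicator 1 (tgt e) * coboundary A e := by
    by_cases he : e ∈ cutEdges I A
    · rw [CharTwo.add_eq_zero.1 (indicator_add_indicator_eq_zero (hK e he))]
    · rw [coboundary_eq_zero_of_notMem_cutEdges hs ht he, mul_zero, mul_zero]
  have hzero := congrFun (boundary_coboundary A) v
  rw [boundary] at hzero ⊢
  rw [hflip (e := (v.1 - 1, v.2, false)) hv' (by simpa using hv),
    hflip (e := (v.1, v.2 - 1, true)) hv' hv']
  simp only [src_mk, tgt_mk_false, tgt_mk_true, sub_add_cancel, ← mul_add]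
  rw [hzero, Pi.zero_apply, mul_zero]

/-- If the bottom were not connected to the top, the part of the coboundary of `A` connected to the
bottom would be a chain of flux `1` at the bottom, flux `0` at the top, and no boundary between. -/
lemma exists_boundary_path {A : Set V} {x₀ x₁ y₀ y₁ : ℤ} (hy : y₀ < y₁)
    (hl : ∀ f : V, f.1 < x₀ → f.2 ∈ Set.Ico y₀ y₁ → f ∈ A)
    (hr : ∀ f : V, x₁ ≤ f.1 → f.2 ∈ Set.Ico y₀ y₁ → f ∉ A) :
    ∃ u t : V, u.1 ∈ Set.Icc x₀ x₁ ∧ u.2 = y₀ ∧ t.2 = y₁ ∧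
      Reach (cutEdges (Set.Ico y₀ y₁) A) u t := by
  by_contra! hno
  have hx : x₀ - 1 ≤ x₁ := by
    by_contra! hx
    exact hr (x₁, y₀) le_rfl ⟨le_rfl, hy⟩ (hl (x₁, y₀) (by grind) ⟨le_rfl, hy⟩)
  set K := reachSet (cutEdges (Set.Ico y₀ y₁) A) {u | u.1 ∈ Set.Icc x₀ x₁ ∧ u.2 = y₀}
  have hKcut : ∀ e ∈ cutEdges (Set.Ico y₀ y₁) A, (src e ∈ K ↔ tgt e ∈ K) :=
    fun e he ↦ src_mem_reachSet_iff he
  set c : Edge → ZMod 2 := fun e ↦ K.indicator 1 (src e) * coboundary A e with hc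
  have hbottom : flux c x₀ x₁ y₀ = 1 := by
    rw [← flux_coboundary hx (hl (x₀ - 1, y₀) (by simp) ⟨le_rfl, hy⟩)
      (hr (x₁, y₀) le_rfl ⟨le_rfl, hy⟩)]
    refine Finset.sum_congr rfl fun x hx ↦ ?_
    have hxK : (x, y₀) ∈ K := subset_reachSet _ _ ⟨Finset.mem_Icc.1 hx, rfl⟩
    simp [hc, hxK]
  have htop : flux c x₀ x₁ (y₁ - 1) = 0 := by
    have hrow : y₁ - 1 ∈ Set.Ico y₀ y₁ := ⟨by omega, by omega⟩
    refine Finset.sum_eq_zero fun x _ ↦ ?_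
    by_cases he : (x, y₁ - 1, true) ∈ cutEdges (Set.Ico y₀ y₁) A
    · have hxK : (x, y₁ - 1) ∉ K := fun h ↦ by
        obtain ⟨u, ⟨hu, hu₀⟩, hreach⟩ := (hKcut _ he).1 h
        exact hno u (x, y₁) hu hu₀ rfl (by simpa using hreach)
      simp [hc, hxK]
    · simp only [hc]
      rw [coboundary_eq_zero_of_notMem_cutEdges hrow hrow he, mul_zero]
  have hside (x : ℤ) (hxl : x < x₀ ∨ x₁ ≤ x) (y : ℤ) (hy : y ∈ Set.Ioo y₀ y₁) :
      c (x, y, false) = 0 := by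
    have h₀ : y - 1 ∈ Set.Ico y₀ y₁ := ⟨by grind, by grind⟩
    have h₁ : y ∈ Set.Ico y₀ y₁ := ⟨hy.1.le, hy.2⟩
    refine mul_eq_zero_of_right _ (indicator_add_indicator_eq_zero ?_)
    rcases hxl with h | h
    · exact iff_of_true (hl _ h h₀) (hl _ h (by simpa using h₁))
    · exact iff_of_false (hr _ h h₀) (hr _ h (by simpa using h₁))
  have hconst := flux_eq_flux_bottom (y := y₁ - 1) hx
    (fun x _ y hy ↦ boundary_indicator_mul_coboundary hKcut ⟨hy.1.le, hy.2⟩ ⟨by grind, by grind⟩)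
    (hside _ (.inl (by omega))) (hside _ (.inr le_rfl)) ⟨by omega, by omega⟩
  exact zero_ne_one (htop.symm.trans (hconst.trans hbottom))

end exists_boundary_path

/-! ### Crossings of rectangles -/

/-- The edges of `O` in the cluster of the vertex `u`. -/
def clusterEdges (O : Set Edge) (u : V) : Set Edge := {e ∈ O | Reach O u (src e)}

lemma reach_of_mem_clusterEdges {O : Set Edge} {u z : V} {e : Edge} (he : e ∈ clusterEdges O u)
    (hz : z ∈ ends e) : Reach O u z := by
  rcases Sym2.mem_iff.1 hz with rfl | rfl
  · exact he.2
  · exact he.2.trans (.of_mem he.1)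

lemma Reach.clusterEdges {O : Set Edge} {u v : V} (h : Reach O u v) :
    Reach (clusterEdges O u) u v := by
  induction h with
  | refl => exact .refl _ u
  | @tail b c hub hbc ih =>
    obtain ⟨e, he, hbc⟩ := hbc
    refine ih.tail ⟨e, ⟨he, ?_⟩, hbc⟩
    rcases Sym2.eq_iff.1 hbc with ⟨h, _⟩ | ⟨h, _⟩
    · exact h ▸ hub
    · exact h ▸ hub.tail ⟨e, he, hbc⟩

/-- `f` is one of the four faces around the vertex `v`. -/
def FaceAt (v f : V) : Prop := f.1 ∈ Set.Icc (v.1 - 1) v.1 ∧ f.2 ∈ Set.Icc (v.2 - 1) v.2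

lemma faceAt_of_mem_ends_dualEdge {e : Edge} {v : V} (hv : v ∈ ends (dualEdge e)) :
    FaceAt v (src e) ∧ FaceAt v (tgt e) := by
  obtain ⟨x, y, _ | _⟩ := e <;> rcases Sym2.mem_iff.1 hv with rfl | rfl <;> simp [FaceAt]

lemma exists_common_face {e : Edge} {y₀ y₁ : ℤ} (hy : y₀ < y₁) (hs : (src e).2 ∈ Set.Icc y₀ y₁)
    (ht : (tgt e).2 ∈ Set.Icc y₀ y₁) :
    ∃ f : V, f.2 ∈ Set.Ico y₀ y₁ ∧ ∀ v ∈ ends e, FaceAt v f := by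
  obtain ⟨x, y, _ | _⟩ := e
  · by_cases h : y < y₁
    · exact ⟨(x, y), ⟨hs.1, h⟩, Sym2.ball.2 (by simp [FaceAt])⟩
    · refine ⟨(x, y - 1), ⟨?_, ?_⟩, Sym2.ball.2 (by simp [FaceAt])⟩
      · simp only [not_lt, Order.le_sub_one_iff] at h ⊢; omega
      · simpa using hs.2
  · exact ⟨(x, y), ⟨hs.1, by simpa using ht.2⟩, Sym2.ball.2 (by simp [FaceAt])⟩

lemma EdgeAdj.exists_common_face {O : Set Edge} {u v : V} (h : EdgeAdj O u v) {y₀ y₁ : ℤ}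
    (hy : y₀ < y₁) (hu : u.2 ∈ Set.Icc y₀ y₁) (hv : v.2 ∈ Set.Icc y₀ y₁) :
    ∃ f : V, f.2 ∈ Set.Ico y₀ y₁ ∧ FaceAt u f ∧ FaceAt v f := by
  obtain ⟨e, -, he⟩ := h
  have hrows : ∀ w ∈ ends e, w.2 ∈ Set.Icc y₀ y₁ := by rw [he]; exact Sym2.ball.2 ⟨hu, hv⟩
  obtain ⟨f, hf, hface⟩ := DaC.exists_common_face hy (Sym2.ball.1 hrows).1 (Sym2.ball.1 hrows).2
  rw [he] at hface
  exact ⟨f, hf, Sym2.ball.1 hface⟩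

lemma mem_iff_mem_of_faceAt {I : Set ℤ} {L : Set V} {v f g : V}
    (hv : ∀ e ∈ cutEdges I L, v ∉ ends e) (hf : FaceAt v f) (hfI : f.2 ∈ I) (hg : FaceAt v g)
    (hgI : g.2 ∈ I) : f ∈ L ↔ g ∈ L := by
  obtain ⟨x, y⟩ := v
  have hhoriz : ∀ j ∈ I, j = y - 1 ∨ j = y → ((x - 1, j) ∈ L ↔ (x, j) ∈ L) := by
    refine fun j hj h ↦ not_not.1 fun hne ↦ hv _ (mk_true_mem_cutEdges.2 ⟨hj, hne⟩) ?_
    rcases h with rfl | rfl <;> simp [ends]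
  have hvert : ∀ i, i = x - 1 ∨ i = x → y - 1 ∈ I → y ∈ I →
      ((i, y - 1) ∈ L ↔ (i, y) ∈ L) := by
    refine fun i h hj hj' ↦ not_not.1 fun hne ↦ hv _ (mk_false_mem_cutEdges.2 ⟨hj, hj', hne⟩) ?_
    rcases h with rfl | rfl <;> simp [ends]
  obtain ⟨i, j⟩ := f
  obtain ⟨i', j'⟩ := g
  simp only [FaceAt, Set.mem_Icc] at hf hg
  have hi : i = x - 1 ∨ i = x := by omega
  have hi' : i' = x - 1 ∨ i' = x := by omega
  have hj : j = y - 1 ∨ j = y := by omega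
  have hj' : j' = y - 1 ∨ j' = y := by omega
  calc (i, j) ∈ L ↔ (i', j) ∈ L := by have := hhoriz j hfI hj; grind
    _ ↔ (i', j') ∈ L := by have := hvert i' hi'; grind

lemma exists_mem_ends_cutEdges {r : V → V → Prop} {I : Set ℤ} {L : Set V}
    (hr : ∀ a b, r a b → ∃ f : V, f.2 ∈ I ∧ FaceAt a f ∧ FaceAt b f) {p q f g : V}
    (h : Relation.ReflTransGen r p q) (hf : FaceAt p f) (hfI : f.2 ∈ I) (hfL : f ∈ L)
    (hg : FaceAt q g) (hgI : g.2 ∈ I) (hgL : g ∉ L) :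
    ∃ z, Relation.ReflTransGen r p z ∧ ∃ e ∈ cutEdges I L, z ∈ ends e := by
  by_contra! hno
  suffices ∀ z, Relation.ReflTransGen r p z → ∀ k, FaceAt z k → k.2 ∈ I → k ∈ L from
    hgL (this q h g hg hgI)
  intro z hz
  induction hz with
  | refl => exact fun k hk hkI ↦
      (mem_iff_mem_of_faceAt (hno p .refl) hf hfI hk hkI).1 hfL
  | @tail b c hb hbc ih =>
    intro k hk hkI
    obtain ⟨k', hkI', hkb, hkc⟩ := hr b c hbc
    exact (mem_iff_mem_of_faceAt (hno c (hb.tail hbc)) hkc hkI' hk hkI).1 (ih k' hkb hkI')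

/-- In `O`, the vertex `u` of the bottom side of the rectangle `[x₀, x₁] × [y₀, y₁]` is connected
inside the rectangle to the vertex `t` of the top side. -/
structure VertPath (O : Set Edge) (x₀ x₁ y₀ y₁ : ℤ) (u t : V) : Prop where
  start_mem : u.1 ∈ Set.Icc x₀ x₁
  start_snd : u.2 = y₀
  end_snd : t.2 = y₁
  reach : Reach (O ∩ edgesIn (box x₀ x₁ y₀ y₁)) u t

/-- In `O`, the vertex `p` of the left side of the rectangle `[x₀, x₁] × [y₀, y₁]` is connected
inside the rectangle to the vertex `q` of the right side. -/
structure HorizPath (O : Set Edge) (x₀ x₁ y₀ y₁ : ℤ) (p q : V) : Prop where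
  start_mem : p.2 ∈ Set.Icc y₀ y₁
  start_fst : p.1 = x₀
  end_fst : q.1 = x₁
  reach : Reach (O ∩ edgesIn (box x₀ x₁ y₀ y₁)) p q

/-- The rectangle `[x₀, x₁] × [y₀, y₁]` is crossed from bottom to top by a path of `O`. -/
def VertCross (O : Set Edge) (x₀ x₁ y₀ y₁ : ℤ) : Prop := ∃ u t, VertPath O x₀ x₁ y₀ y₁ u t

/-- The rectangle `[x₀, x₁] × [y₀, y₁]` is crossed from left to right by a path of `O`. -/
def HorizCross (O : Set Edge) (x₀ x₁ y₀ y₁ : ℤ) : Prop := ∃ p q, HorizPath O x₀ x₁ y₀ y₁ p q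

section Crossings

variable {O O' : Set Edge} {x₀ x₁ y₀ y₁ : ℤ} {u t p q : V}

lemma VertPath.start_mem_box (h : VertPath O x₀ x₁ y₀ y₁ u t) (hy : y₀ ≤ y₁) :
    u ∈ box x₀ x₁ y₀ y₁ := ⟨h.start_mem, h.start_snd.ge, h.start_snd.trans_le hy⟩

lemma HorizPath.start_mem_box (h : HorizPath O x₀ x₁ y₀ y₁ p q) (hx : x₀ ≤ x₁) :
    p ∈ box x₀ x₁ y₀ y₁ := ⟨⟨h.start_fst.ge, h.start_fst.trans_le hx⟩, h.start_mem⟩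

lemma HorizPath.mono (h : HorizPath O x₀ x₁ y₀ y₁ p q) (hO : O ⊆ O') :
    HorizPath O' x₀ x₁ y₀ y₁ p q :=
  ⟨h.1, h.2, h.3, h.4.mono (Set.inter_subset_inter_left _ hO)⟩

lemma VertPath.mono (h : VertPath O x₀ x₁ y₀ y₁ u t) (hO : O ⊆ O') :
    VertPath O' x₀ x₁ y₀ y₁ u t :=
  ⟨h.1, h.2, h.3, h.4.mono (Set.inter_subset_inter_left _ hO)⟩

lemma VertCross.mono (h : VertCross O x₀ x₁ y₀ y₁) (hO : O ⊆ O') : VertCross O' x₀ x₁ y₀ y₁ :=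
  let ⟨u, t, hut⟩ := h
  ⟨u, t, hut.mono hO⟩

lemma HorizCross.mono (h : HorizCross O x₀ x₁ y₀ y₁) (hO : O ⊆ O') :
    HorizCross O' x₀ x₁ y₀ y₁ :=
  let ⟨p, q, hpq⟩ := h
  ⟨p, q, hpq.mono hO⟩

lemma VertPath.exists_cut (h : VertPath O x₀ x₁ y₀ y₁ u t) :
    ∃ L : Set V, (∀ f : V, f.1 < x₀ → f ∈ L) ∧
      (∀ f : V, x₁ ≤ f.1 → f.2 ∈ Set.Ico y₀ y₁ → f ∉ L) ∧
      cutEdges (Set.Ico y₀ y₁) L ⊆ clusterEdges (O ∩ edgesIn (box x₀ x₁ y₀ y₁)) u :=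
  DaC.exists_cut (fun _ he ↦ he.1.2) h.reach.clusterEdges h.start_mem h.start_snd h.end_snd

lemma exists_row_mem_Ico {y : ℤ} (hy : y₀ < y₁) (h : y ∈ Set.Icc y₀ y₁) :
    ∃ j ∈ Set.Ico y₀ y₁, j ∈ Set.Icc (y - 1) y := by
  by_cases hlt : y < y₁
  · exact ⟨y, ⟨h.1, hlt⟩, by simp⟩
  · exact ⟨y - 1, by grind, by simp⟩

lemma VertPath.inter_horizPath (h : VertPath O x₀ x₁ y₀ y₁ u t) {a b c d : ℤ}
    (h' : HorizPath O' a b c d p q) (hy : y₀ < y₁) (ha : a ≤ x₀) (hb : x₁ ≤ b) (hc : y₀ ≤ c)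
    (hd : d ≤ y₁) :
    ∃ z, Reach (O ∩ edgesIn (box x₀ x₁ y₀ y₁)) u z ∧ Reach (O' ∩ edgesIn (box a b c d)) p z := by
  obtain ⟨L, hleft, hright, hcut⟩ := h.exists_cut
  have hab : a ≤ b := ha.trans ((h.start_mem.1.trans h.start_mem.2).trans hb)
  have hrow {z : V} (hz : z ∈ box a b c d) : z.2 ∈ Set.Icc y₀ y₁ :=
    ⟨hc.trans hz.2.1, hz.2.2.trans hd⟩
  have hp := h'.start_mem_box hab
  obtain ⟨j, hj, hjp⟩ := exists_row_mem_Ico hy (hrow hp)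
  obtain ⟨k, hk, hkq⟩ := exists_row_mem_Ico hy (hrow (h'.reach.mem_of_edgesIn hp))
  obtain ⟨z, hpz, e, he, hze⟩ := exists_mem_ends_cutEdges (I := Set.Ico y₀ y₁) (L := L)
    (f := (p.1 - 1, j)) (g := (q.1, k))
    (fun v w hvw ↦ by
      obtain ⟨e, he, hvw'⟩ := id hvw
      have hbox : v ∈ box a b c d ∧ w ∈ box a b c d := Sym2.ball.1 (hvw' ▸ he.2)
      exact hvw.exists_common_face hy (hrow hbox.1) (hrow hbox.2))
    h'.reach ⟨by simp, hjp⟩ hj (hleft _ (by have := h'.start_fst; grind))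
    ⟨by simp, hkq⟩ hk (hright _ (by have := h'.end_fst; grind) hk)
  exact ⟨z, reach_of_mem_clusterEdges (hcut he) hze, hpz⟩

end Crossings

/-- The faces of the strip `y₀ ≤ y < y₁` connected to its left end by dual paths crossing no edge of
`O` inside the rectangle `[x₀, x₁] × [y₀, y₁]`. -/
def dualLeftCluster (O : Set Edge) (x₀ x₁ y₀ y₁ : ℤ) : Set V :=
  reachSet {e | (src e).2 ∈ Set.Ico y₀ y₁ ∧ (tgt e).2 ∈ Set.Ico y₀ y₁ ∧
    dualEdge e ∉ O ∩ edgesIn (box x₀ x₁ y₀ y₁)} {f | f.1 < x₀ ∧ f.2 ∈ Set.Ico y₀ y₁}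

section dualLeftCluster

variable {O : Set Edge} {x₀ x₁ y₀ y₁ : ℤ}

lemma mem_dualLeftCluster_of_lt {f : V} (hf : f.1 < x₀) (hfy : f.2 ∈ Set.Ico y₀ y₁) :
    f ∈ dualLeftCluster O x₀ x₁ y₀ y₁ := subset_reachSet _ _ ⟨hf, hfy⟩

lemma cutEdges_dualLeftCluster_subset :
    cutEdges (Set.Ico y₀ y₁) (dualLeftCluster O x₀ x₁ y₀ y₁) ⊆
      O ∩ edgesIn (box x₀ x₁ y₀ y₁) := by
  rintro _ ⟨e, ⟨hs, ht, hne⟩, rfl⟩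
  by_contra he
  exact hne (src_mem_reachSet_iff ⟨hs, ht, he⟩)

lemma vertCross_iff_dualLeftCluster (hy : y₀ < y₁) :
    VertCross O x₀ x₁ y₀ y₁ ↔ ∀ f ∈ dualLeftCluster O x₀ x₁ y₀ y₁, f.1 < x₁ := by
  constructor
  · rintro ⟨u, t, h⟩ f hf
    obtain ⟨L, hleft, hright, hcut⟩ := h.exists_cut
    have hsub : dualLeftCluster O x₀ x₁ y₀ y₁ ⊆ L ∩ {f | f.2 ∈ Set.Ico y₀ y₁} := by
      refine reachSet_subset (fun f hf ↦ ⟨hleft f hf.1, hf.2⟩) fun e ⟨hs, ht, he⟩ ↦ ?_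
      have hL : src e ∈ L ↔ tgt e ∈ L := not_not.1 fun hne ↦
        he (hcut (dualEdge_mem_cutEdges.2 ⟨hs, ht, hne⟩)).1
      exact and_congr hL (iff_of_true hs ht)
    by_contra! hx
    exact hright f hx (hsub hf).2 (hsub hf).1
  · intro h
    obtain ⟨u, t, hu, hu₀, ht, hut⟩ := exists_boundary_path hy
      (fun f ↦ mem_dualLeftCluster_of_lt) (fun f hx _ hf ↦ (h f hf).not_ge hx)
    exact ⟨u, t, hu, hu₀, ht, hut.mono cutEdges_dualLeftCluster_subset⟩

lemma mem_edgesIn_of_dualEdge_notMem {e : Edge} (hs : (src e).2 ∈ Set.Ico y₀ y₁)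
    (ht : (tgt e).2 ∈ Set.Ico y₀ y₁) (he : dualEdge e ∉ O ∩ edgesIn (box x₀ x₁ y₀ y₁))
    (hx₁ : (src e).1 < x₁) (hx₀ : x₀ ≤ (tgt e).1) :
    e ∈ dualConfig O ∩ edgesIn (box (x₀ - 1) x₁ y₀ (y₁ - 1)) := by
  have hboth : dualEdge e ∈ edgesIn (box x₀ x₁ y₀ y₁) ∧
      e ∈ edgesIn (box (x₀ - 1) x₁ y₀ (y₁ - 1)) := by
    obtain ⟨x, y, _ | _⟩ := e <;> simp [mem_edgesIn, mem_box] at * <;> omega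
  exact ⟨fun h ↦ he ⟨h, hboth.1⟩, hboth.2⟩

lemma vertCross_or_horizCross_dualConfig (O : Set Edge) (hx : x₀ ≤ x₁) (hy : y₀ < y₁) :
    VertCross O x₀ x₁ y₀ y₁ ∨ HorizCross (dualConfig O) (x₀ - 1) x₁ y₀ (y₁ - 1) := by
  refine or_iff_not_imp_right.2 fun hno ↦ (vertCross_iff_dualLeftCluster hy).2 ?_
  set B := box (x₀ - 1) x₁ y₀ (y₁ - 1)
  set S : Set V := {u | u.1 = x₀ - 1 ∧ u.2 ∈ Set.Icc y₀ (y₁ - 1)}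
  set R := reachSet (dualConfig O ∩ edgesIn B) S
  have hRB {f : V} (hf : f ∈ R) : f ∈ B ∧ f.1 < x₁ := by
    obtain ⟨u, ⟨hu, hu'⟩, huf⟩ := hf
    have hfB : f ∈ B := huf.mem_of_edgesIn ⟨⟨hu.ge, by omega⟩, hu'⟩
    exact ⟨hfB, hfB.1.2.lt_of_ne fun h ↦ hno ⟨u, f, hu', hu, h, huf⟩⟩
  have hBR {f : V} (hf : f ∈ B) : f ∈ {f : V | f.1 < x₀} ∪ R ↔ f ∈ R := by
    refine ⟨fun h ↦ h.elim (fun h ↦ ?_) id, .inr⟩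
    exact subset_reachSet _ _ ⟨le_antisymm (by grind) hf.1.1, hf.2⟩
  have hsub : dualLeftCluster O x₀ x₁ y₀ y₁ ⊆ {f : V | f.1 < x₀} ∪ R := by
    refine reachSet_subset (fun f hf ↦ .inl hf.1) fun e ⟨hs, ht, he⟩ ↦ ?_
    have hst : (src e).1 ≤ (tgt e).1 := by obtain ⟨x, y, _ | _⟩ := e <;> simp
    rcases lt_or_ge (tgt e).1 x₀ with h₀ | h₀
    · exact iff_of_true (.inl (hst.trans_lt h₀)) (.inl h₀)
    rcases lt_or_ge (src e).1 x₁ with h₁ | h₁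
    · have he' := mem_edgesIn_of_dualEdge_notMem hs ht he h₁ h₀
      rw [hBR (mem_edgesIn.1 he'.2).1, hBR (mem_edgesIn.1 he'.2).2]
      exact src_mem_reachSet_iff he'
    · have hout {f : V} (hf : x₁ ≤ f.1) : f ∉ {f : V | f.1 < x₀} ∪ R := fun h ↦
        h.elim (fun h ↦ by grind) fun h ↦ (hRB h).2.not_ge hf
      exact iff_of_false (hout h₁) (hout (h₁.trans hst))
  exact fun f hf ↦ (hsub hf).elim (fun h ↦ lt_of_lt_of_le h hx) fun h ↦ (hRB h).2

end dualLeftCluster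

/-! ### Symmetries of the lattice -/

/-- The action on edges of the translation by `(k, l)`. -/
def translate (k l : ℤ) : Edge ≃ Edge :=
  (Equiv.addRight k).prodCongr ((Equiv.addRight l).prodCongr (Equiv.refl Bool))

/-- The action on edges of the reflection in the diagonal. -/
def transpose : Edge ≃ Edge where
  toFun e := (e.2.1, e.1, !e.2.2)
  invFun e := (e.2.1, e.1, !e.2.2)
  left_inv _ := by simp
  right_inv _ := by simp

/-- The action on edges of the reflection `(x, y) ↦ (k - x, y)`. -/
def reflectFst (k : ℤ) : Edge ≃ Edge where
  toFun e := (if e.2.2 then k - e.1 else k - 1 - e.1, e.2)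
  invFun e := (if e.2.2 then k - e.1 else k - 1 - e.1, e.2)
  left_inv := by rintro ⟨x, y, _ | _⟩ <;> simp
  right_inv := by rintro ⟨x, y, _ | _⟩ <;> simp

/-- The action on edges of the reflection `(x, y) ↦ (x, k - y)`. -/
def reflectSnd (k : ℤ) : Edge ≃ Edge := (transpose.trans (reflectFst k)).trans transpose

lemma ends_translate (k l : ℤ) (e : Edge) :
    ends (translate k l e) = (ends e).map fun v ↦ (v.1 + k, v.2 + l) := by
  obtain ⟨x, y, _ | _⟩ := e <;> simp [ends, translate, src, tgt, add_right_comm]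

@[simp] lemma transpose_mk (x y : ℤ) (b : Bool) : transpose (x, y, b) = (y, x, !b) := rfl

lemma transpose_transpose (e : Edge) : transpose (transpose e) = e := transpose.left_inv e

lemma preimage_transpose_preimage_transpose (O : Set Edge) :
    transpose ⁻¹' (transpose ⁻¹' O) = O := by
  ext e
  simp only [Set.mem_preimage, transpose_transpose]

lemma ends_transpose (e : Edge) : ends (transpose e) = (ends e).map Prod.swap := by
  obtain ⟨x, y, _ | _⟩ := e <;> simp [ends]

lemma ends_reflectFst (k : ℤ) (e : Edge) :
    ends (reflectFst k e) = (ends e).map fun v ↦ (k - v.1, v.2) := by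
  obtain ⟨x, y, _ | _⟩ := e
  · rw [ends, ends, Sym2.map_mk, Sym2.eq_swap]
    simp only [reflectFst, src, tgt, Equiv.coe_fn_mk, Bool.false_eq_true, if_false, sub_add_cancel,
      sub_right_comm, ← sub_sub]
  · simp [ends, reflectFst, src, tgt]

lemma ends_reflectSnd (k : ℤ) (e : Edge) :
    ends (reflectSnd k e) = (ends e).map fun v ↦ (v.1, k - v.2) := by
  rw [reflectSnd, Equiv.trans_apply, ends_transpose, Equiv.trans_apply, ends_reflectFst,
    ends_transpose, Sym2.map_map, Sym2.map_map]
  rfl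

lemma reflectSnd_reflectSnd (k : ℤ) (e : Edge) : reflectSnd k (reflectSnd k e) = e := by
  obtain ⟨x, y, _ | _⟩ := e <;> simp [reflectSnd, reflectFst]

section Symmetries

variable {O : Set Edge} {x₀ x₁ y₀ y₁ : ℤ}

lemma HorizCross.of_translate (k l : ℤ) (h : HorizCross (translate k l ⁻¹' O) x₀ x₁ y₀ y₁) :
    HorizCross O (x₀ + k) (x₁ + k) (y₀ + l) (y₁ + l) := by
  obtain ⟨p, q, ⟨hp, hp₀, hq, h⟩⟩ := h
  refine ⟨_, _, ⟨by simpa using hp, by simpa using hp₀, by simpa using hq,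
    h.map_edgesIn (ends_translate k l) fun v hv ↦ ?_⟩⟩
  simpa [mem_box] using hv

lemma VertPath.of_transpose {u t : V} (h : VertPath (transpose ⁻¹' O) x₀ x₁ y₀ y₁ u t) :
    HorizPath O y₀ y₁ x₀ x₁ u.swap t.swap :=
  ⟨h.1, h.2, h.3, h.4.map_edgesIn ends_transpose fun _ hv ↦ ⟨hv.2, hv.1⟩⟩

lemma HorizPath.of_transpose {p q : V} (h : HorizPath (transpose ⁻¹' O) x₀ x₁ y₀ y₁ p q) :
    VertPath O y₀ y₁ x₀ x₁ p.swap q.swap :=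
  ⟨h.1, h.2, h.3, h.4.map_edgesIn ends_transpose fun _ hv ↦ ⟨hv.2, hv.1⟩⟩

end Symmetries

/-! ### Tee crossings -/

/-- The image of a set of faces under the reflection in the line `y = n`. -/
def mirror (n : ℤ) (a : Set V) : Set V := {f | (f.1, 2 * n - 1 - f.2) ∈ a}

/-- The vertex `v` is a corner of a face of `a`. -/
def Touches (a : Set V) (v : V) : Prop := ∃ f ∈ a, FaceAt v f

section Touches

variable {a b : Set V} {v : V}

@[simp] lemma mirror_mirror (n : ℤ) (a : Set V) : mirror n (mirror n a) = a := by
  simp [mirror]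

lemma touches_union : Touches (a ∪ b) v ↔ Touches a v ∨ Touches b v := by
  simp only [Touches, Set.mem_union, or_and_right, exists_or]

lemma Touches.mirror {n : ℤ} (h : Touches a v) : Touches (mirror n a) (v.1, 2 * n - v.2) := by
  obtain ⟨f, hf, hv⟩ := h
  refine ⟨(f.1, 2 * n - 1 - f.2), by simpa [DaC.mirror] using hf, hv.1, ?_⟩
  have := hv.2
  grind

lemma Touches.of_mirror {n : ℤ} (h : Touches a (v.1, 2 * n - v.2)) :
    Touches (DaC.mirror n a) v := by
  simpa using h.mirror (n := n)

lemma touches_of_mem_ends_cutEdges {I : Set ℤ} {e : Edge} (he : e ∈ cutEdges I a)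
    (hv : v ∈ ends e) : Touches a v := by
  obtain ⟨e, ⟨-, -, hne⟩, rfl⟩ := he
  obtain ⟨hs, ht⟩ := faceAt_of_mem_ends_dualEdge hv
  by_cases h : src e ∈ a
  · exact ⟨_, h, hs⟩
  · exact ⟨_, by tauto, ht⟩

end Touches

/-- Adjacency through an edge of `O` leading to a vertex which is not a corner of a face of `A`. -/
def AvoidAdj (A : Set V) (O : Set Edge) (u v : V) : Prop := EdgeAdj O u v ∧ ¬Touches A v

/-- A path of `O` leads from a corner of a face of `a` to the line `x = m`, touching no face of `A`
after its first vertex. -/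
def Escapes (a A : Set V) (O : Set Edge) (m : ℤ) : Prop :=
  ∃ v w : V, Touches a v ∧ w.1 = m ∧ Relation.ReflTransGen (AvoidAdj A O) v w

lemma exists_last_visit {α : Type*} {r : α → α → Prop} {P : α → Prop} {x y : α}
    (h : Relation.ReflTransGen r x y) (hx : P x) :
    ∃ z, P z ∧ Relation.ReflTransGen (fun a b ↦ r a b ∧ ¬P b) z y := by
  induction h with
  | refl => exact ⟨x, hx, .refl⟩
  | @tail b c _ hbc ih =>
    by_cases hc : P c
    · exact ⟨c, hc, .refl⟩
    · obtain ⟨z, hz, hzb⟩ := ih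
      exact ⟨z, hz, hzb.tail ⟨hbc, hc⟩⟩

section Escapes

variable {O : Set Edge} {a A : Set V} {n m : ℤ}

lemma escapes_or_escapes_mirror (hn : 0 < n) (ha : ∀ f : V, f.1 = -1 → f.2 ∈ Set.Ico 0 n → f ∈ a)
    (h : HorizCross O 0 m 0 (2 * n)) :
    Escapes a (a ∪ mirror n a) (O ∩ edgesIn (box 0 m 0 (2 * n))) m ∨
      Escapes (mirror n a) (a ∪ mirror n a) (O ∩ edgesIn (box 0 m 0 (2 * n))) m := by
  obtain ⟨p, q, ⟨hp, hp₀, hq, h⟩⟩ := h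
  have htouch : Touches (a ∪ mirror n a) p := by
    rw [Set.mem_Icc] at hp
    rw [touches_union]
    by_cases hpn : p.2 < n
    · exact .inl ⟨(-1, p.2), ha _ rfl ⟨hp.1, hpn⟩, by simp [FaceAt, hp₀]⟩
    · refine .inr ⟨(-1, max n (p.2 - 1)), ha _ rfl ?_, ?_⟩
      · simp only [Set.mem_Ico]; omega
      · simp only [FaceAt, Set.mem_Icc]; omega
  obtain ⟨v, hv, hvq⟩ := exists_last_visit h htouch
  exact (touches_union.1 hv).imp (fun hv ↦ ⟨v, q, hv, hq, hvq⟩) fun hv ↦ ⟨v, q, hv, hq, hvq⟩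

lemma Escapes.of_mirror (h : Escapes (mirror n a) (a ∪ mirror n a)
      (reflectSnd (2 * n) ⁻¹' O ∩ edgesIn (box 0 m 0 (2 * n))) m) :
    Escapes a (a ∪ mirror n a) (O ∩ edgesIn (box 0 m 0 (2 * n))) m := by
  obtain ⟨v, w, hv, hw, h⟩ := h
  refine ⟨(v.1, 2 * n - v.2), (w.1, 2 * n - w.2), by simpa using hv.mirror (n := n), hw,
    h.lift (fun v : V ↦ (v.1, 2 * n - v.2)) fun b c ⟨hbc, hc⟩ ↦
      ⟨hbc.map_edgesIn (ends_reflectSnd _) fun v hv ↦ ?_, fun ht ↦ hc ?_⟩⟩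
  · simp only [mem_box] at hv ⊢
    omega
  · rw [touches_union] at ht ⊢
    exact ht.symm.imp (fun ht ↦ by simpa using ht.of_mirror) fun ht ↦ ht.of_mirror

end Escapes

/-- An edge path crosses `[0, n]²` from bottom to top, and its lower end is also connected inside
`[0, m] × [0, 2 n]` to the line `x = m`. -/
def TeeCross (O : Set Edge) (n m : ℤ) : Prop :=
  ∃ u t w : V, VertPath O 0 n 0 n u t ∧ w.1 = m ∧ Reach (O ∩ edgesIn (box 0 m 0 (2 * n))) u w

section TeeCross

variable {O D : Set Edge} {n m : ℤ}

lemma TeeCross.mono {O' : Set Edge} (h : TeeCross O n m) (hO : O ⊆ O') : TeeCross O' n m :=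
  let ⟨u, t, w, hut, hw, huw⟩ := h
  ⟨u, t, w, hut.mono hO, hw, huw.mono (Set.inter_subset_inter_left _ hO)⟩

/-- `L` is cut out by the path below the line `y = n` and by its mirror image above. -/
lemma exists_cut_mirror (hn : 0 ≤ n) (hD : D ⊆ edgesIn (box 0 n 0 n)) {u t : V} (h : Reach D u t)
    (hu : u.1 ∈ Set.Icc 0 n) (hu₀ : u.2 = 0) (ht : t.2 = n) :
    ∃ L : Set V, (∀ f : V, f.1 < 0 → f ∈ L) ∧
      (∀ f : V, n ≤ f.1 → f.2 ∈ Set.Ico 0 (2 * n) → f ∉ L) ∧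
      cutEdges (Set.Ico 0 (2 * n)) L ⊆ D ∪ reflectSnd (2 * n) ⁻¹' D := by
  have hrefl : Reach (reflectSnd (2 * n) ⁻¹' D) (u.1, 2 * n - u.2) (t.1, 2 * n - t.2) :=
    h.map (ends_reflectSnd _) fun e he ↦ by rwa [Set.mem_preimage, reflectSnd_reflectSnd]
  have ht' : (t.1, 2 * n - t.2) = t := Prod.ext rfl (by simp only; omega)
  rw [ht'] at hrefl
  refine exists_cut (Set.union_subset (hD.trans (edgesIn_mono ?_)) fun e he v hv ↦ ?_)
    ((h.mono Set.subset_union_left).trans (hrefl.symm.mono Set.subset_union_right)) hu hu₀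
    (by simp [hu₀])
  · exact box_subset_box le_rfl le_rfl le_rfl (by omega)
  · have hv' := hD he _ (by rw [ends_reflectSnd]; exact Sym2.mem_map.2 ⟨v, hv, rfl⟩)
    simp only [mem_box] at hv' ⊢
    omega

lemma dualLeftCluster_subset_of_cut {L : Set V} (hL : ∀ f : V, f.1 < 0 → f ∈ L)
    (hD : D ⊆ O ∩ edgesIn (box 0 n 0 n))
    (hcut : cutEdges (Set.Ico 0 (2 * n)) L ⊆ D ∪ reflectSnd (2 * n) ⁻¹' D) :
    dualLeftCluster O 0 n 0 n ⊆ L := by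
  refine reachSet_subset (fun f hf ↦ hL f hf.1) fun e ⟨hs, ht, he⟩ ↦ not_not.1 fun hne ↦ ?_
  have hmem : dualEdge e ∈ cutEdges (Set.Ico 0 (2 * n)) L := dualEdge_mem_cutEdges.2
    ⟨⟨hs.1, by grind⟩, ⟨ht.1, by grind⟩, hne⟩
  rcases hcut hmem with h | h
  · exact he (hD h)
  · have := mem_edgesIn.1 (hD h).2
    obtain ⟨x, y, _ | _⟩ := e <;> simp [reflectSnd, reflectFst, mem_box] at this ht <;> omega

lemma snd_mem_Ico_of_mem_dualLeftCluster {f : V} (hf : f ∈ dualLeftCluster O 0 n 0 n) :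
    f.2 ∈ Set.Ico 0 n := by
  have hrows : dualLeftCluster O 0 n 0 n ⊆ {f | f.2 ∈ Set.Ico 0 n} :=
    reachSet_subset (fun f hf ↦ hf.2) fun e he ↦ iff_of_true he.1 he.2.1
  exact hrows hf

lemma reach_of_avoidAdj {A : Set V} {v w : V} (h : Relation.ReflTransGen (AvoidAdj A O) v w) :
    Reach O v w := Relation.ReflTransGen.mono (fun _ _ h ↦ h.1) _ _ h

lemma exists_mem_ends_cutEdges_of_avoidAdj {A L : Set V} {v w f : V} (hn : 0 < n)
    (hL : ∀ f : V, n ≤ f.1 → f.2 ∈ Set.Ico 0 (2 * n) → f ∉ L) (hf : f ∈ L)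
    (hfy : f.2 ∈ Set.Ico 0 n) (hvf : FaceAt v f) (hw : n ≤ w.1)
    (h : Relation.ReflTransGen (AvoidAdj A (O ∩ edgesIn (box 0 m 0 (2 * n)))) v w) :
    ∃ z, (z = v ∨ ¬Touches A z) ∧ ∃ e ∈ cutEdges (Set.Ico 0 (2 * n)) L, z ∈ ends e := by
  have hwrow : w.2 ∈ Set.Icc 0 (2 * n) :=
    (reach_of_avoidAdj h).mem_of_mem (L := {v | v.2 ∈ Set.Icc 0 (2 * n)})
    (fun e he ↦ iff_of_true (mem_edgesIn.1 he.2).1.2 (mem_edgesIn.1 he.2).2.2)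
    (by have := hvf.2; simp only [Set.mem_ofPred_eq]; grind)
  obtain ⟨k, hk, hkw⟩ := exists_row_mem_Ico (by omega) hwrow
  obtain ⟨z, hvz, hz⟩ := exists_mem_ends_cutEdges (I := Set.Ico 0 (2 * n)) (L := L)
    (g := (w.1, k)) (fun b c ⟨hbc, _⟩ ↦ by
      obtain ⟨e, he, hends⟩ := id hbc
      have hbox : b ∈ box 0 m 0 (2 * n) ∧ c ∈ box 0 m 0 (2 * n) := Sym2.ball.1 (hends ▸ he.2)
      exact hbc.exists_common_face (by omega) hbox.1.2 hbox.2.2)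
    h hvf ⟨hfy.1, by grind⟩ hf ⟨by simp, hkw⟩ hk (hL _ hw hk)
  refine ⟨z, hvz.cases_tail.imp_right fun ⟨b, _, hbz⟩ ↦ hbz.2, hz⟩

/-- The escaping path leaves from a vertex of the crossing: it starts to the left of the union of
the crossing and its mirror image, ends to the right of it, and avoids it in between. -/
lemma Escapes.exists_reach_of_touches {a : Set V} (hn : 0 < n) (hm : n ≤ m) {u t : V}
    (ha : dualLeftCluster O 0 n 0 n = a) (hut : Reach (cutEdges (Set.Ico 0 n) a) u t)
    (hu : u.1 ∈ Set.Icc 0 n) (hu₀ : u.2 = 0) (ht : t.2 = n)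
    (h : Escapes a (a ∪ mirror n a) (O ∩ edgesIn (box 0 m 0 (2 * n))) m) :
    ∃ v w : V, w.1 = m ∧ Reach (cutEdges (Set.Ico 0 n) a) u v ∧
      Reach (O ∩ edgesIn (box 0 m 0 (2 * n))) v w := by
  subst ha
  obtain ⟨v, w, ⟨f, hfa, hvf⟩, hw, hvw⟩ := h
  refine ⟨v, w, hw, ?_, reach_of_avoidAdj hvw⟩
  set D := clusterEdges (cutEdges (Set.Ico 0 n) (dualLeftCluster O 0 n 0 n)) u
  have hDcut : D ⊆ cutEdges (Set.Ico 0 n) (dualLeftCluster O 0 n 0 n) := fun e he ↦ he.1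
  have hD : D ⊆ O ∩ edgesIn (box 0 n 0 n) := hDcut.trans cutEdges_dualLeftCluster_subset
  obtain ⟨L, hleft, hright, hcut⟩ :=
    exists_cut_mirror hn.le (fun e he ↦ (hD he).2) hut.clusterEdges hu hu₀ ht
  have hrow := snd_mem_Ico_of_mem_dualLeftCluster hfa
  obtain ⟨z, hz, e, he, hze⟩ := exists_mem_ends_cutEdges_of_avoidAdj hn hright
    (dualLeftCluster_subset_of_cut hleft hD hcut hfa) hrow hvf (hm.trans hw.ge) hvw
  have hmir : (z.1, 2 * n - z.2) ∈ ends (reflectSnd (2 * n) e) := by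
    rw [ends_reflectSnd]; exact Sym2.mem_map.2 ⟨z, hze, rfl⟩
  obtain rfl : z = v := hz.resolve_right fun hz ↦ hz <| touches_union.2 <| (hcut he).imp
    (fun h ↦ touches_of_mem_ends_cutEdges (hDcut h) hze)
    fun h ↦ (touches_of_mem_ends_cutEdges (hDcut h) hmir).of_mirror
  rcases hcut he with h | h
  · exact reach_of_mem_clusterEdges h hze
  · have hbox := (hD h).2 _ hmir
    have hfix : (z.1, 2 * n - z.2) = z := Prod.ext rfl (by have := hvf.2; have := hbox.2; grind)
    rw [hfix] at hmir
    exact reach_of_mem_clusterEdges h hmir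

lemma teeCross_of_escapes (hn : 0 < n) (hm : n ≤ m) (hV : VertCross O 0 n 0 n)
    (h : Escapes (dualLeftCluster O 0 n 0 n)
      (dualLeftCluster O 0 n 0 n ∪ mirror n (dualLeftCluster O 0 n 0 n))
      (O ∩ edgesIn (box 0 m 0 (2 * n))) m) : TeeCross O n m := by
  obtain ⟨u, t, hu, hu₀, ht, hut⟩ := exists_boundary_path hn
    (fun f ↦ mem_dualLeftCluster_of_lt)
    (fun f hx _ hf ↦ ((vertCross_iff_dualLeftCluster hn).1 hV f hf).not_ge hx)
  obtain ⟨v, w, hw, huv, hvw⟩ := h.exists_reach_of_touches hn hm rfl hut hu hu₀ ht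
  refine ⟨u, t, w, ⟨hu, hu₀, ht, hut.mono cutEdges_dualLeftCluster_subset⟩, hw,
    (huv.mono (cutEdges_dualLeftCluster_subset.trans ?_)).trans hvw⟩
  exact Set.inter_subset_inter_right _
    (edgesIn_mono (box_subset_box le_rfl hm le_rfl (by omega)))

end TeeCross

/-! ### Gluing crossings -/

section Gluing

variable {O : Set Edge} {a b c d e f n x₀ x₁ y₀ y₁ : ℤ}

lemma HorizCross.glue (hA : HorizCross O a b y₀ y₁) (hV : VertCross O c d y₀ y₁)
    (hB : HorizCross O e f y₀ y₁) (hy : y₀ < y₁) (hae : a ≤ e) (hec : e ≤ c) (hdb : d ≤ b)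
    (hbf : b ≤ f) : HorizCross O a f y₀ y₁ := by
  obtain ⟨p, q, hpq⟩ := hA
  obtain ⟨p', q', hpq'⟩ := hB
  obtain ⟨u, t, hut⟩ := hV
  obtain ⟨z, huz, hpz⟩ := hut.inter_horizPath hpq hy (by omega) (by omega) le_rfl le_rfl
  obtain ⟨z', huz', hpz'⟩ := hut.inter_horizPath hpq' hy (by omega) (by omega) le_rfl le_rfl
  have hmono {k l : ℤ} (hk : a ≤ k) (hl : l ≤ f) :
      O ∩ edgesIn (box k l y₀ y₁) ⊆ O ∩ edgesIn (box a f y₀ y₁) :=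
    Set.inter_subset_inter_right _ (edgesIn_mono (box_subset_box hk hl le_rfl le_rfl))
  have hzz' := (huz.symm.trans huz').mono (hmono (by omega) (by omega))
  exact ⟨p, q', hpq.1, hpq.2, hpq'.3, (hpz.mono (hmono le_rfl hbf)).trans
    (hzz'.trans ((hpz'.symm.trans hpq'.4).mono (hmono hae le_rfl)))⟩

lemma TeeCross.horizCross (h : TeeCross O n (2 * n)) (h' : TeeCross (reflectFst n ⁻¹' O) n (2 * n))
    (hH : HorizCross O 0 n 0 n) (hn : 0 < n) : HorizCross O (-n) (2 * n) 0 (2 * n) := by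
  obtain ⟨u, t, w, hut, hw, huw⟩ := h
  obtain ⟨u', t', w', hut', hw', huw'⟩ := h'
  obtain ⟨p, q, hpq⟩ := hH
  have hmirror : VertPath O 0 n 0 n (n - u'.1, u'.2) (n - t'.1, t'.2) := by
    refine ⟨?_, hut'.2, hut'.3, hut'.4.map_edgesIn (ends_reflectFst n) fun v hv ↦ ?_⟩
    · have := hut'.1; grind
    · simp only [mem_box] at hv ⊢; omega
  have hmirror' : Reach (O ∩ edgesIn (box (-n) n 0 (2 * n))) (n - u'.1, u'.2) (n - w'.1, w'.2) :=
    huw'.map_edgesIn (ends_reflectFst n) fun v hv ↦ by simp only [mem_box] at hv ⊢; omega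
  obtain ⟨z, huz, hpz⟩ := hut.inter_horizPath hpq hn le_rfl le_rfl le_rfl le_rfl
  obtain ⟨z', huz', hpz'⟩ := hmirror.inter_horizPath hpq hn le_rfl le_rfl le_rfl le_rfl
  have hmono {k l i j : ℤ} (hk : -n ≤ k) (hl : l ≤ 2 * n) (hi : 0 ≤ i) (hj : j ≤ 2 * n) :
      O ∩ edgesIn (box k l i j) ⊆ O ∩ edgesIn (box (-n) (2 * n) 0 (2 * n)) :=
    Set.inter_subset_inter_right _ (edgesIn_mono (box_subset_box hk hl hi hj))
  have hjoin : Reach (O ∩ edgesIn (box (-n) (2 * n) 0 (2 * n))) (n - u'.1, u'.2) u :=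
    ((huz'.trans hpz'.symm).trans (hpz.trans huz.symm)).mono
      (hmono (by omega) (by omega) le_rfl (by omega))
  have hleft := hmirror'.mono (hmono le_rfl (by omega) le_rfl le_rfl)
  refine ⟨_, w, (hleft.mem_of_edgesIn ?_).2, by simp only; omega, hw,
    (hleft.symm.trans hjoin).trans (huw.mono (hmono (by omega) le_rfl le_rfl le_rfl))⟩
  exact box_subset_box (by omega) (by omega) le_rfl (by omega) (hmirror.start_mem_box hn.le)

lemma HorizCross.mono_rows {y₀' y₁' : ℤ} (h : HorizCross O x₀ x₁ y₀ y₁) (hy₀ : y₀' ≤ y₀)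
    (hy₁ : y₁ ≤ y₁') : HorizCross O x₀ x₁ y₀' y₁' :=
  let ⟨p, q, hpq⟩ := h
  ⟨p, q, Set.Icc_subset_Icc hy₀ hy₁ hpq.1, hpq.2, hpq.3, hpq.4.mono
    (Set.inter_subset_inter_right _ (edgesIn_mono (box_subset_box le_rfl le_rfl hy₀ hy₁)))⟩

end Gluing

/-! ### Circuits -/

section CutEdges

variable {O : Set Edge} {I : Set ℤ} {A B : Set V}

lemma clusterEdges_mono {O' : Set Edge} {u v : V} (hO : O ⊆ O') (h : Reach O' v u) :
    clusterEdges O u ⊆ clusterEdges O' v :=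
  fun _ he ↦ ⟨hO he.1, h.trans (he.2.mono hO)⟩

lemma transpose_mem_clusterEdges {e : Edge} {u : V} (he : e ∈ clusterEdges (transpose ⁻¹' O) u) :
    transpose e ∈ clusterEdges O u.swap := by
  refine ⟨he.1, ?_⟩
  have h : Reach O u.swap (src e).swap := he.2.map ends_transpose fun _ h ↦ h
  obtain ⟨x, y, b⟩ := e
  exact h

lemma cutEdges_diff_subset : cutEdges I (A \ B) ⊆ cutEdges I A ∪ cutEdges I B := by
  rintro _ ⟨e, ⟨hs, ht, hne⟩, rfl⟩
  rw [Set.mem_union, dualEdge_mem_cutEdges, dualEdge_mem_cutEdges]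
  simp only [Set.mem_sdiff] at hne
  tauto

lemma cutEdges_univ_subset (hA : ∀ f ∈ A, f.2 ∈ I → f.1 ∈ I) (hB : ∀ f ∈ B, f.2 ∈ I → f.1 ∈ I) :
    cutEdges Set.univ {f | f.1 ∈ I ∧ f.2 ∈ I ∧ f ∈ A ∧ f.swap ∈ B} ⊆
      cutEdges I A ∪ transpose ⁻¹' cutEdges I B := by
  rintro _ ⟨e, ⟨-, -, hne⟩, rfl⟩
  obtain ⟨x, y, _ | _⟩ := e
  · simp only [Set.mem_union, Set.mem_preimage, dualEdge_mk_false, transpose_mk, Bool.not_true,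
      mk_false_mem_cutEdges, mk_true_mem_cutEdges, add_sub_cancel_right]
    have h₁ := hA (x, y)
    have h₂ := hA (x + 1, y)
    simp only [src_mk, tgt_mk_false, Set.mem_ofPred_eq, Prod.swap_prod_mk] at hne h₁ h₂
    tauto
  · simp only [Set.mem_union, Set.mem_preimage, dualEdge_mk_true, transpose_mk, Bool.not_false,
      mk_false_mem_cutEdges, mk_true_mem_cutEdges, add_sub_cancel_right]
    have h₁ := hB (y, x)
    have h₂ := hB (y + 1, x)
    simp only [src_mk, tgt_mk_true, Set.mem_ofPred_eq, Prod.swap_prod_mk] at hne h₁ h₂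
    tauto

end CutEdges

/-- The four rectangles forming the annulus between the squares `[-a, a]²` and `[-3 a, 3 a]²` are
crossed lengthwise by paths of `O`, which then contain a circuit around the origin. -/
structure Circuit (O : Set Edge) (a : ℤ) : Prop where
  bottom : HorizCross O (-(3 * a)) (3 * a) (-(3 * a)) (-a)
  top : HorizCross O (-(3 * a)) (3 * a) a (3 * a)
  left : VertCross O (-(3 * a)) (-a) (-(3 * a)) (3 * a)
  right : VertCross O a (3 * a) (-(3 * a)) (3 * a)

section Circuit

variable {O : Set Edge} {a : ℤ}

lemma exists_cut_between {u t u' t' : V}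
    (hl : VertPath O (-(3 * a)) (-a) (-(3 * a)) (3 * a) u t)
    (hr : VertPath O a (3 * a) (-(3 * a)) (3 * a) u' t') :
    ∃ A : Set V,
      (∀ f ∈ A, f.2 ∈ Set.Ico (-(3 * a)) (3 * a) → f.1 ∈ Set.Ico (-(3 * a)) (3 * a)) ∧
      (∀ f : V, f.1 ∈ Set.Ico (-a) a → f.2 ∈ Set.Ico (-(3 * a)) (3 * a) → f ∈ A) ∧
      cutEdges (Set.Ico (-(3 * a)) (3 * a)) A ⊆ clusterEdges O u ∪ clusterEdges O u' := by
  obtain ⟨L, hL, hL', hLcut⟩ := hl.exists_cut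
  obtain ⟨R, hR, hR', hRcut⟩ := hr.exists_cut
  refine ⟨R \ L, fun f hf hI ↦ ⟨?_, ?_⟩, fun f hf hI ↦ ⟨hR f hf.2, hL' f hf.1 hI⟩,
    cutEdges_diff_subset.trans (Set.union_subset ?_ ?_)⟩
  · exact not_lt.1 fun h ↦ hf.2 (hL f h)
  · exact not_le.1 fun h ↦ hR' f h hI hf.1
  · exact (hRcut.trans (clusterEdges_mono Set.inter_subset_left (.refl _ _))).trans
      Set.subset_union_right
  · exact (hLcut.trans (clusterEdges_mono Set.inter_subset_left (.refl _ _))).trans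
      Set.subset_union_left

lemma Circuit.exists_interior (h : Circuit O a) (ha : 0 < a) :
    ∃ (P : Set V) (u : V), u ∈ box (-(3 * a)) (3 * a) (-(3 * a)) (3 * a) ∧ u.1 ≤ -a ∧
      (∀ f : V, f.1 ∈ Set.Ico (-a) a → f.2 ∈ Set.Ico (-a) a → f ∈ P) ∧
      (∀ f ∈ P, f.1 ∈ Set.Ico (-(3 * a)) (3 * a) ∧ f.2 ∈ Set.Ico (-(3 * a)) (3 * a)) ∧
      cutEdges Set.univ P ⊆ clusterEdges O u := by
  obtain ⟨⟨b, b', hb⟩, ⟨t, t', ht⟩, ⟨l, l', hl⟩, ⟨r, r', hr⟩⟩ := h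
  obtain ⟨z₁, hlz₁, hbz₁⟩ := hl.inter_horizPath hb (by omega) (by omega) (by omega) (by omega)
    (by omega)
  obtain ⟨z₂, hrz₂, hbz₂⟩ := hr.inter_horizPath hb (by omega) (by omega) (by omega) (by omega)
    (by omega)
  obtain ⟨z₃, hlz₃, htz₃⟩ := hl.inter_horizPath ht (by omega) (by omega) (by omega) (by omega)
    (by omega)
  have hjoin {v w z : V} {S T : Set Edge} (hv : Reach (O ∩ S) v z) (hw : Reach (O ∩ T) w z) :
      Reach O v w := (hv.mono Set.inter_subset_left).trans (hw.mono Set.inter_subset_left).symm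
  have hlb : Reach O l b := hjoin hlz₁ hbz₁
  have hlr : Reach O l r := hlb.trans (hjoin hrz₂ hbz₂).symm
  have hlt : Reach O l t := hjoin hlz₃ htz₃
  rw [← preimage_transpose_preimage_transpose O] at hb ht
  obtain ⟨A, hAI, hA, hAcut⟩ := exists_cut_between hl hr
  obtain ⟨B, hBI, hB, hBcut⟩ := exists_cut_between hb.of_transpose ht.of_transpose
  have hsub : Set.Ico (-a) a ⊆ Set.Ico (-(3 * a)) (3 * a) :=
    Set.Ico_subset_Ico (by omega) (by omega)
  refine ⟨{f | f.1 ∈ Set.Ico (-(3 * a)) (3 * a) ∧ f.2 ∈ Set.Ico (-(3 * a)) (3 * a) ∧ f ∈ A ∧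
      f.swap ∈ B}, l, ⟨⟨hl.1.1, hl.1.2.trans (by omega)⟩, hl.2.ge, hl.2.trans_le (by omega)⟩,
    hl.1.2, fun f hf₁ hf₂ ↦ ⟨hsub hf₁, hsub hf₂, hA f hf₁ (hsub hf₂), hB f.swap hf₂ (hsub hf₁)⟩,
    fun f hf ↦ ⟨hf.1, hf.2.1⟩, (cutEdges_univ_subset hAI hBI).trans ?_⟩
  refine Set.union_subset (hAcut.trans (Set.union_subset ?_ ?_)) fun e he ↦ ?_
  · exact subset_rfl
  · exact clusterEdges_mono subset_rfl hlr
  · rcases hBcut he with he | he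
    · exact clusterEdges_mono subset_rfl hlb (by
        simpa only [transpose_transpose, Prod.swap_swap] using transpose_mem_clusterEdges he)
    · exact clusterEdges_mono subset_rfl hlt (by
        simpa only [transpose_transpose, Prod.swap_swap] using transpose_mem_clusterEdges he)

lemma Circuit.exists_reach (h : Circuit O a) (ha : 0 < a) :
    ∃ u ∈ box (-(3 * a)) (3 * a) (-(3 * a)) (3 * a), u.1 ≤ -a ∧ ∀ (F : Set Edge) (v : V),
      Reach F (0, 0) v → v ∉ box (-(3 * a)) (3 * a) (-(3 * a)) (3 * a) →
      ∃ z, Reach F (0, 0) z ∧ Reach O u z := by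
  obtain ⟨P, u, hu, hua, hP, hPI, hcut⟩ := h.exists_interior ha
  refine ⟨u, hu, hua, fun F v hv hvbox ↦ ?_⟩
  have hvP : v ∉ P := fun hvP ↦ hvbox
    ⟨Set.Ico_subset_Icc_self (hPI v hvP).1, Set.Ico_subset_Icc_self (hPI v hvP).2⟩
  obtain ⟨z, hz, e, he, hze⟩ := exists_mem_ends_cutEdges (I := Set.univ) (L := P) (f := (0, 0))
    (g := v) (fun b c hbc ↦ by
      obtain ⟨f, -, hf⟩ := hbc.exists_common_face (y₀ := min b.2 c.2) (y₁ := max b.2 c.2 + 1)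
        (by omega) (by rw [Set.mem_Icc]; omega) (by rw [Set.mem_Icc]; omega)
      exact ⟨f, trivial, hf⟩)
    hv (by simp [FaceAt]) trivial (hP _ (by simp; omega) (by simp; omega)) (by simp [FaceAt])
    trivial hvP
  exact ⟨z, hz, reach_of_mem_clusterEdges (hcut he) hze⟩

/-- The vertex `v` of the primal lattice is the upper right corner of the face
`(v.1 - 1, v.2 - 1)` of the dual one. -/
lemma Circuit.mem_box_of_reach (h : Circuit (dualConfig O) a) (ha : 0 < a) {v w : V}
    (hv : v ∈ box (-a + 1) a (-a + 1) a) (hvw : Reach O v w) :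
    w ∈ box (-(3 * a)) (3 * a) (-(3 * a)) (3 * a) := by
  obtain ⟨P, u, -, -, hP, hPI, hcut⟩ := h.exists_interior ha
  have hw := hvw.mem_of_mem (L := {v : V | (v.1 - 1, v.2 - 1) ∈ P}) (fun e he ↦ ?_)
    (hP _ ?_ ?_)
  · have := hPI _ hw
    simp only [Set.mem_Ico, mem_box] at this ⊢
    omega
  · refine not_not.1 fun hne ↦ ?_
    obtain ⟨x, y, b⟩ := e
    have hmem := (hcut (dualEdge_mem_cutEdges (e := (x - 1, y - 1, b)).2 ⟨trivial, trivial, ?_⟩)).1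
    · cases b <;> exact hmem (by simpa using he)
    · cases b <;> simpa using hne
  · simp only [mem_box, Set.mem_Ico] at hv ⊢; omega
  · simp only [mem_box, Set.mem_Ico] at hv ⊢; omega

end Circuit

/-! ### Bernoulli percolation -/

open ProbabilityTheory unitInterval

section Bernoulli

variable {ι κ : Type*} {s t : Set (Set ι)} {S T : Set ι}

/-- The event `s` of a random subset `O` is determined by `O ∩ S`. -/
def DeterminedBy (s : Set (Set ι)) (S : Set ι) : Prop :=
  ∀ ⦃O O' : Set ι⦄, O ∩ S = O' ∩ S → O ∈ s → O' ∈ s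

lemma DeterminedBy.mono (h : DeterminedBy s S) (hST : S ⊆ T) : DeterminedBy s T :=
  fun O O' hO ↦ h <| by
    rw [← Set.inter_eq_right.2 hST, ← Set.inter_assoc, hO, Set.inter_assoc]

lemma DeterminedBy.inter (hs : DeterminedBy s S) (ht : DeterminedBy t S) :
    DeterminedBy (s ∩ t) S :=
  fun _ _ hO h ↦ ⟨hs hO h.1, ht hO h.2⟩

lemma DeterminedBy.preimage {s : Set (Set κ)} {S : Set κ} (h : DeterminedBy s S) (f : κ → ι) :
    DeterminedBy ((f ⁻¹' ·) ⁻¹' s) (f '' S) := by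
  refine fun O O' hO ↦ h ?_
  ext i
  exact and_congr_left fun hi ↦ by
    simpa [Set.mem_image_of_mem f hi] using congrArg (f i ∈ ·) hO

lemma DeterminedBy.eq_preimage (h : DeterminedBy s S) :
    s = (Subtype.val ⁻¹' · : Set ι → Set S) ⁻¹' {a | Subtype.val '' a ∈ s} := by
  ext O
  simp only [Set.mem_preimage, Set.mem_ofPred_eq, Subtype.image_preimage_coe]
  exact ⟨fun hO ↦ h (by ext; simp; tauto) hO, fun hO ↦ h (by ext; simp; tauto) hO⟩

lemma measurable_preimage (f : κ → ι) : Measurable (f ⁻¹' · : Set ι → Set κ) :=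
  measurable_set_iff.2 fun i ↦ measurable_set_mem (f i)

lemma DeterminedBy.measurableSet (h : DeterminedBy s S) (hS : S.Finite) : MeasurableSet s := by
  have := hS.to_subtype
  rw [h.eq_preimage]
  exact measurable_preimage _ (Set.toFinite _).measurableSet

lemma setBernoulli_univ (p : I) :
    setBer((Set.univ : Set ι), p) =
      (Measure.infinitePi fun _ : ι ↦ bernoulliMeasure True False p).map
        (fun P ↦ {i | P i}) := by
  simp only [setBernoulli_eq_map, Set.mem_univ, bernoulliMeasure_def]

lemma measurable_setOf_apply : Measurable fun P : ι → Prop ↦ {i | P i} :=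
  measurable_set_iff.2 measurable_pi_apply

lemma measurePreserving_preimage (p : I) {f : κ → ι} (hf : f.Injective) :
    MeasurePreserving (f ⁻¹' ·) setBer((Set.univ : Set ι), p) setBer((Set.univ : Set κ), p) := by
  refine ⟨measurable_preimage f, ?_⟩
  rw [setBernoulli_univ, setBernoulli_univ,
    Measure.map_map (measurable_preimage f) measurable_setOf_apply,
    ← Measure.map_infinitePi_infinitePi_of_inj (P := fun _ ↦ bernoulliMeasure True False p) hf,
    Measure.map_map measurable_setOf_apply (by fun_prop)]
  rfl

lemma measurePreserving_compl (p : I) :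
    MeasurePreserving compl setBer((Set.univ : Set ι), p) setBer((Set.univ : Set ι), σ p) := by
  have hm : Measurable (compl : Set ι → Set ι) :=
    measurable_set_iff.2 fun i ↦ (measurable_set_mem i).not
  have hnot : (bernoulliMeasure True False p).map Not = bernoulliMeasure True False (σ p) := by
    rw [map_bernoulliMeasure]
    simp [bernoulliMeasure_def, add_comm]
  refine ⟨hm, ?_⟩
  rw [setBernoulli_univ, setBernoulli_univ, Measure.map_map hm measurable_setOf_apply, ← hnot,
    ← Measure.infinitePi_map_pi _ fun _ ↦ .of_discrete,
    Measure.map_map measurable_setOf_apply (by fun_prop)]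
  rfl

lemma iIndepFun_mem (p : I) :
    iIndepFun (fun (i : ι) (O : Set ι) ↦ i ∈ O) setBer((Set.univ : Set ι), p) := by
  rw [iIndepFun_iff_map_fun_eq_infinitePi_map measurable_set_mem, setBernoulli_univ,
    Measure.map_map (by fun_prop) measurable_setOf_apply]
  simp_rw [Measure.map_map (measurable_set_mem _) measurable_setOf_apply]
  exact Measure.map_id.trans <| congrArg _ <| funext fun i ↦
    (Measure.infinitePi_map_eval (fun _ ↦ bernoulliMeasure True False p) i).symm

lemma DeterminedBy.measure_inter {p : I} (hs : DeterminedBy s S) (ht : DeterminedBy t T)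
    (hS : S.Finite) (hT : T.Finite) (hST : Disjoint S T) :
    setBer(Set.univ, p) (s ∩ t) = setBer(Set.univ, p) s * setBer(Set.univ, p) t := by
  lift S to Finset ι using hS
  lift T to Finset ι using hT
  have hind := (iIndepFun_mem p).indepFun_finset S T (Finset.disjoint_coe.1 hST)
    (fun i ↦ measurable_set_mem i)
  have hind' := hind.comp measurable_setOf_apply measurable_setOf_apply
  rw [hs.eq_preimage, ht.eq_preimage]
  exact hind'.measure_inter_preimage_eq_mul _ _ (Set.toFinite _).measurableSet
    (Set.toFinite _).measurableSet

lemma iIndepSet_of_determinedBy (p : I) {J : Type*} {s : J → Set (Set ι)} {S : J → Set ι}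
    (hs : ∀ j, DeterminedBy (s j) (S j)) (hS : ∀ j, (S j).Finite)
    (hd : Pairwise (Function.onFun Disjoint S)) : iIndepSet s setBer(Set.univ, p) := by
  classical
  rw [iIndepSet_iff_meas_biInter fun j ↦ (hs j).measurableSet (hS j)]
  intro F
  induction F using Finset.induction_on with
  | empty => simp
  | insert j F hj ih =>
    have hF : DeterminedBy (⋂ k ∈ F, s k) (⋃ k ∈ F, S k) := fun O O' hO h ↦
      Set.mem_iInter₂.2 fun k hk ↦ (hs k).mono (Set.subset_biUnion_of_mem hk) hO
        (Set.mem_iInter₂.1 h k hk)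
    rw [Finset.set_biInter_insert, Finset.prod_insert hj, ← ih]
    refine (hs j).measure_inter hF (hS j) (F.finite_toSet.biUnion fun k _ ↦ hS k) ?_
    exact Set.disjoint_iUnion₂_right.2 fun k hk ↦ hd (ne_of_mem_of_not_mem hk hj).symm

lemma setBernoulli_real_singleton_mul [Finite κ] (p : I) (a b : Set κ) :
    setBer(Set.univ, p).real {a} * setBer(Set.univ, p).real {b} =
      setBer(Set.univ, p).real {a ⊓ b} * setBer(Set.univ, p).real {a ⊔ b} := by
  have hcard := Set.ncard_union_add_ncard_inter a b
  have hcompl := Set.ncard_union_add_ncard_inter aᶜ bᶜ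
  rw [← Set.compl_inter, ← Set.compl_union] at hcompl
  simp only [setBernoulli_real_singleton p (Set.subset_univ _) Set.finite_univ,
    ← Set.compl_eq_univ_sdiff, Set.inf_eq_inter, Set.sup_eq_union]
  rw [mul_mul_mul_comm (_ ^ a.ncard), mul_mul_mul_comm (_ ^ (a ∩ b).ncard), ← pow_add, ← pow_add,
    ← pow_add, ← pow_add, ← hcard, ← hcompl, add_comm (a ∪ b).ncard]

lemma measureReal_mul_le_inter_of_finite [Finite κ] (p : I) {s t : Set (Set κ)}
    (hs : IsUpperSet s) (ht : IsUpperSet t) :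
    setBer(Set.univ, p).real s * setBer(Set.univ, p).real t ≤
      setBer(Set.univ, p).real (s ∩ t) := by
  classical
  have := Fintype.ofFinite (Set κ)
  set μ := setBer((Set.univ : Set κ), p)
  have hsum (u : Set (Set κ)) : μ.real u = ∑ a, μ.real {a} * u.indicator 1 a := by
    rw [← Set.coe_toFinset u, ← sum_measureReal_singleton]
    simp [Set.indicator_apply, Finset.sum_ite]
  have hmono {u : Set (Set κ)} (hu : IsUpperSet u) : Monotone (u.indicator (1 : Set κ → ℝ)) := by
    intro a b hab
    by_cases ha : a ∈ u
    · simp [ha, hu hab ha]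
    · simpa [ha] using Set.indicator_nonneg (by simp) b
  have hfkg := fkg (μ := fun a ↦ μ.real {a}) (f := s.indicator 1) (g := t.indicator 1)
    (fun _ ↦ measureReal_nonneg) (fun a ↦ Set.indicator_nonneg (by simp) a)
    (fun a ↦ Set.indicator_nonneg (by simp) a) (hmono hs) (hmono ht)
    (fun a b ↦ (setBernoulli_real_singleton_mul p a b).le)
  have htotal : ∑ a, μ.real {a} = 1 := by simp
  rw [hsum s, hsum t, hsum (s ∩ t), Set.inter_indicator_one]
  exact hfkg.trans_eq (by rw [htotal, one_mul]; rfl)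

/-- Increasing events depending on finitely many elements, the class to which Harris' inequality
is applied. -/
structure LocalIncreasing (s : Set (Set ι)) : Prop where
  isUpperSet : IsUpperSet s
  exists_determinedBy : ∃ S : Set ι, S.Finite ∧ DeterminedBy s S

namespace LocalIncreasing

lemma measurableSet (h : LocalIncreasing s) : MeasurableSet s := by
  obtain ⟨-, S, hS, hd⟩ := h
  exact hd.measurableSet hS

lemma inter (hs : LocalIncreasing s) (ht : LocalIncreasing t) : LocalIncreasing (s ∩ t) := by
  obtain ⟨hus, S, hS, hds⟩ := hs
  obtain ⟨hut, T, hT, hdt⟩ := ht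
  exact ⟨hus.inter hut, S ∪ T, hS.union hT,
    (hds.mono Set.subset_union_left).inter (hdt.mono Set.subset_union_right)⟩

lemma preimage {s : Set (Set κ)} (h : LocalIncreasing s) (f : κ → ι) :
    LocalIncreasing ((f ⁻¹' ·) ⁻¹' s) := by
  obtain ⟨hus, S, hS, hds⟩ := h
  exact ⟨fun _ _ hO h ↦ hus (Set.preimage_mono hO) h, f '' S, hS.image f, hds.preimage f⟩

lemma measure_mul_le_inter (p : I) (hs : LocalIncreasing s) (ht : LocalIncreasing t) :
    setBer(Set.univ, p) s * setBer(Set.univ, p) t ≤ setBer(Set.univ, p) (s ∩ t) := by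
  obtain ⟨hus, S, hS, hds⟩ := hs
  obtain ⟨hut, T, hT, hdt⟩ := ht
  have := (hS.union hT).to_subtype
  have hpres := measurePreserving_preimage p (Subtype.val_injective (p := (· ∈ S ∪ T)))
  have hmeas (u : Set (Set ↥(S ∪ T))) : MeasurableSet u := u.toFinite.measurableSet
  rw [(hds.mono Set.subset_union_left).eq_preimage, (hdt.mono Set.subset_union_right).eq_preimage,
    ← Set.preimage_inter, hpres.measure_preimage (hmeas _).nullMeasurableSet,
    hpres.measure_preimage (hmeas _).nullMeasurableSet,
    hpres.measure_preimage (hmeas _).nullMeasurableSet, ← ENNReal.toReal_le_toReal (by finiteness)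
    (by finiteness), ENNReal.toReal_mul]
  exact measureReal_mul_le_inter_of_finite p (fun _ _ hO h ↦ hus (Set.image_mono hO) h)
    (fun _ _ hO h ↦ hut (Set.image_mono hO) h)

end LocalIncreasing

lemma setBernoulli_coe_subset (p : I) (F : Finset ι) :
    setBer(Set.univ, p) {B : Set ι | ↑F ⊆ B} = (toNNReal p : ℝ≥0∞) ^ F.card := by
  have hpre : (fun P : ι → Prop ↦ {i | P i}) ⁻¹' {B | ↑F ⊆ B} = Set.pi F fun _ ↦ {True} := by
    ext P
    simp [Set.subset_def, Set.mem_pi]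
  have hdet : DeterminedBy {B : Set ι | ↑F ⊆ B} F :=
    fun _ _ hO h i hi ↦ (hO ▸ ⟨h hi, hi⟩ : i ∈ _ ∩ (F : Set ι)).1
  have htrue : bernoulliMeasure True False p {True} = toNNReal p :=
    bernoulliMeasure_apply_of_mem_of_notMem p .of_discrete rfl (by simp)
  rw [setBernoulli_univ, Measure.map_apply measurable_setOf_apply
    (hdet.measurableSet F.finite_toSet), hpre, Measure.infinitePi_pi _ fun _ _ ↦ .of_discrete,
    htrue, Finset.prod_const]

lemma setBernoulli_mem (p : I) (i : ι) :
    setBer(Set.univ, p) {B : Set ι | i ∈ B} = (toNNReal p : ℝ≥0∞) := by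
  simpa using setBernoulli_coe_subset p {i}

lemma setBernoulli_superset_of_infinite {p : I} (hS : S.Infinite) (hp : p < 1) :
    setBer(Set.univ, p) {B : Set ι | S ⊆ B} = 0 := by
  have hle (n : ℕ) : setBer(Set.univ, p) {B : Set ι | S ⊆ B} ≤ (toNNReal p : ℝ≥0∞) ^ n := by
    obtain ⟨F, hF, rfl⟩ := hS.exists_subset_card_eq n
    rw [← setBernoulli_coe_subset]
    exact measure_mono fun B hB ↦ hF.trans hB
  exact le_antisymm (ge_of_tendsto' (ENNReal.tendsto_pow_atTop_nhds_zero_of_lt_one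
    (by exact_mod_cast hp)) hle) zero_le

end Bernoulli

/-! ### Crossing probabilities -/

section Exploration

variable {ι α : Type*} {p : I} {X : Set ι → α} {A : Set α} {s : α → Set (Set ι)} {S T : α → Set ι}
  {c : ℝ≥0∞}

/-- `S a` is the set that has to be explored to find that `X = a`; then `s a` is still fresh. -/
lemma measure_preimage_mul_le_of_explore (hX : (Set.range X).Countable)
    (hXS : ∀ a, DeterminedBy (X ⁻¹' {a}) (S a)) (hsT : ∀ a, DeterminedBy (s a) (T a))
    (hS : ∀ a, (S a).Finite) (hT : ∀ a, (T a).Finite) (hST : ∀ a, Disjoint (S a) (T a))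
    (hc : ∀ O, c ≤ setBer(Set.univ, p) (s (X O))) :
    setBer(Set.univ, p) (X ⁻¹' A) * c ≤ setBer(Set.univ, p) {O | X O ∈ A ∧ O ∈ s (X O)} := by
  set μ := setBer((Set.univ : Set ι), p)
  have hcount : (A ∩ Set.range X).Countable := hX.mono Set.inter_subset_right
  have hmeas (a : α) : MeasurableSet (X ⁻¹' {a}) := (hXS a).measurableSet (hS a)
  have hdisj : (A ∩ Set.range X).PairwiseDisjoint (X ⁻¹' {·}) := fun a _ b _ hab ↦
    (Set.disjoint_singleton.2 hab).preimage X
  calc μ (X ⁻¹' A) * c = (∑' a : ↥(A ∩ Set.range X), μ (X ⁻¹' {a.1})) * c := by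
        rw [← measure_biUnion hcount hdisj fun a _ ↦ hmeas a, ← Set.preimage_iUnion₂,
          Set.biUnion_of_singleton, Set.preimage_inter_range]
    _ ≤ ∑' a : ↥(A ∩ Set.range X), μ (X ⁻¹' {a.1} ∩ s a) := by
        rw [← ENNReal.tsum_mul_right]
        refine ENNReal.tsum_le_tsum ?_
        rintro ⟨_, -, O, rfl⟩
        rw [(hXS _).measure_inter (hsT _) (hS _) (hT _) (hST _)]
        gcongr
        exact hc O
    _ = μ (⋃ a ∈ A ∩ Set.range X, X ⁻¹' {a} ∩ s a) :=
        (measure_biUnion hcount (hdisj.mono fun _ ↦ Set.inter_subset_left) fun a _ ↦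
          (hmeas a).inter ((hsT a).measurableSet (hT a))).symm
    _ ≤ μ {O | X O ∈ A ∧ O ∈ s (X O)} :=
        measure_mono <| Set.iUnion₂_subset fun a ha O ⟨hO, hs⟩ ↦ by
          obtain rfl : X O = a := hO
          exact ⟨ha.1, hs⟩

end Exploration

/-- The parameter `1 / 2` of critical bond percolation. -/
noncomputable def half : I := ⟨1 / 2, by norm_num, by norm_num⟩

lemma symm_half : σ half = half := Subtype.ext (by norm_num [half, unitInterval.symm])

/-- The law of the set of open edges in critical bond percolation. -/
local notation "𝐏" => setBer((Set.univ : Set Edge), half)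

lemma measurePreserving_dualConfig : MeasurePreserving dualConfig 𝐏 𝐏 := by
  have h := (measurePreserving_compl half).comp
    (measurePreserving_preimage half dualEdge.injective)
  rwa [symm_half] at h

lemma measure_le_of_preimage {f : Edge → Edge} {s t : Set (Set Edge)} (hf : f.Injective)
    (hs : MeasurableSet s) (h : ∀ O, f ⁻¹' O ∈ s → O ∈ t) : 𝐏 s ≤ 𝐏 t := by
  rw [← (measurePreserving_preimage half hf).measure_preimage hs.nullMeasurableSet]
  exact measure_mono h

lemma finite_box (x₀ x₁ y₀ y₁ : ℤ) : (box x₀ x₁ y₀ y₁).Finite :=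
  (Set.finite_Icc x₀ x₁).prod (Set.finite_Icc y₀ y₁)

lemma finite_edgesIn {B : Set V} (hB : B.Finite) : (edgesIn B).Finite := by
  refine ((hB.prod (Set.finite_univ (α := Bool))).image fun e ↦ (e.1.1, e.1.2, e.2)).subset ?_
  exact fun e he ↦ ⟨(src e, e.2.2), ⟨(mem_edgesIn.1 he).1, trivial⟩, rfl⟩

lemma finite_edgesIn_box (x₀ x₁ y₀ y₁ : ℤ) : (edgesIn (box x₀ x₁ y₀ y₁)).Finite :=
  finite_edgesIn (finite_box x₀ x₁ y₀ y₁)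

lemma determinedBy_horizCross (x₀ x₁ y₀ y₁ : ℤ) :
    DeterminedBy {O | HorizCross O x₀ x₁ y₀ y₁} (edgesIn (box x₀ x₁ y₀ y₁)) :=
  fun _ _ hO ⟨p, q, h⟩ ↦ ⟨p, q, { h with reach := hO ▸ h.reach }⟩

lemma determinedBy_vertCross (x₀ x₁ y₀ y₁ : ℤ) :
    DeterminedBy {O | VertCross O x₀ x₁ y₀ y₁} (edgesIn (box x₀ x₁ y₀ y₁)) :=
  fun _ _ hO ⟨u, t, h⟩ ↦ ⟨u, t, { h with reach := hO ▸ h.reach }⟩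

lemma localIncreasing_horizCross (x₀ x₁ y₀ y₁ : ℤ) :
    LocalIncreasing {O | HorizCross O x₀ x₁ y₀ y₁} :=
  ⟨fun _ _ hO h ↦ h.mono hO, _, finite_edgesIn_box .., determinedBy_horizCross ..⟩

lemma localIncreasing_vertCross (x₀ x₁ y₀ y₁ : ℤ) :
    LocalIncreasing {O | VertCross O x₀ x₁ y₀ y₁} :=
  ⟨fun _ _ hO h ↦ h.mono hO, _, finite_edgesIn_box .., determinedBy_vertCross ..⟩

lemma localIncreasing_teeCross {n m : ℤ} (hn : 0 ≤ n) (hm : n ≤ m) :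
    LocalIncreasing {O | TeeCross O n m} := by
  refine ⟨fun _ _ hO h ↦ h.mono hO, edgesIn (box 0 m 0 (2 * n)), finite_edgesIn_box ..,
    fun O O' hO ⟨u, t, w, hut, hw, h⟩ ↦ ⟨u, t, w, { hut with reach := ?_ }, hw, hO ▸ h⟩⟩
  have hsub : edgesIn (box 0 n 0 n) ⊆ edgesIn (box 0 m 0 (2 * n)) :=
    edgesIn_mono (box_subset_box le_rfl hm le_rfl (by omega))
  have := hut.reach
  rwa [← Set.inter_eq_right.2 hsub, ← Set.inter_assoc, hO, Set.inter_assoc,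
    Set.inter_eq_right.2 hsub] at this

lemma measure_horizCross_translate (k l x₀ x₁ y₀ y₁ : ℤ) :
    𝐏 {O | HorizCross O x₀ x₁ y₀ y₁} ≤
      𝐏 {O | HorizCross O (x₀ + k) (x₁ + k) (y₀ + l) (y₁ + l)} :=
  measure_le_of_preimage (translate k l).injective (localIncreasing_horizCross ..).measurableSet
    fun _ h ↦ h.of_translate

lemma measure_horizCross_le_vertCross (x₀ x₁ y₀ y₁ : ℤ) :
    𝐏 {O | HorizCross O x₀ x₁ y₀ y₁} ≤ 𝐏 {O | VertCross O y₀ y₁ x₀ x₁} :=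
  measure_le_of_preimage transpose.injective (localIncreasing_horizCross ..).measurableSet
    fun _ ⟨_, _, h⟩ ↦ ⟨_, _, h.of_transpose⟩

lemma measure_vertCross_le_horizCross (x₀ x₁ y₀ y₁ : ℤ) :
    𝐏 {O | VertCross O x₀ x₁ y₀ y₁} ≤ 𝐏 {O | HorizCross O y₀ y₁ x₀ x₁} :=
  measure_le_of_preimage transpose.injective (localIncreasing_vertCross ..).measurableSet
    fun _ ⟨_, _, h⟩ ↦ ⟨_, _, h.of_transpose⟩

lemma inv_two_le_of_one_le_add_self {a : ℝ≥0∞} (h : 1 ≤ a + a) : 2⁻¹ ≤ a := by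
  rwa [← two_mul, ← ENNReal.inv_le_iff_le_mul (by simp) (by simp)] at h

lemma inv_two_le_measure_horizCross {n : ℤ} (hn : 1 ≤ n) : 2⁻¹ ≤ 𝐏 {O | HorizCross O 0 n 0 n} := by
  have hself : 1 ≤ 𝐏 {O | VertCross O 1 n 0 n} + 𝐏 {O | HorizCross O 0 n 0 (n - 1)} := by
    rw [← measurePreserving_dualConfig.measure_preimage
      (localIncreasing_horizCross ..).measurableSet.nullMeasurableSet, ← measure_univ (μ := 𝐏)]
    refine (measure_mono fun O _ ↦ ?_).trans (measure_union_le _ _)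
    simpa using vertCross_or_horizCross_dualConfig O hn (by omega : 0 < n)
  have hvert : 𝐏 {O | VertCross O 1 n 0 n} ≤ 𝐏 {O | HorizCross O 0 n 0 (n - 1)} := by
    simpa [← sub_eq_add_neg] using
      (measure_vertCross_le_horizCross 1 n 0 n).trans (measure_horizCross_translate 0 (-1) ..)
  exact (inv_two_le_of_one_le_add_self (hself.trans (add_le_add_left hvert _))).trans
    (measure_mono fun O h ↦ HorizCross.mono_rows h le_rfl (by omega))

lemma inv_two_le_measure_vertCross {n : ℤ} (hn : 1 ≤ n) (k : ℤ) :
    2⁻¹ ≤ 𝐏 {O | VertCross O k (k + n) 0 n} := by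
  simpa [add_comm n k] using (inv_two_le_measure_horizCross hn).trans
    ((measure_horizCross_translate 0 k ..).trans (measure_horizCross_le_vertCross ..))

lemma determinedBy_escapes (a A : Set V) (E : Set Edge) (m : ℤ) :
    DeterminedBy {O | Escapes a A (O ∩ E) m} {e ∈ E | ∃ v ∈ ends e, ¬Touches A v} := by
  rintro O O' hO ⟨v, w, hv, hw, h⟩
  refine ⟨v, w, hv, hw, Relation.ReflTransGen.mono ?_ _ _ h⟩
  rintro b c ⟨⟨e, ⟨he, heE⟩, hbc⟩, hc⟩
  have hmem : e ∈ O ∩ {e ∈ E | ∃ v ∈ ends e, ¬Touches A v} := ⟨he, heE, c, by simp [hbc], hc⟩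
  rw [hO] at hmem
  exact ⟨⟨e, ⟨hmem.1, heE⟩, hbc⟩, hc⟩

lemma determinedBy_dualLeftCluster (x₀ x₁ y₀ y₁ : ℤ) (a : Set V) :
    DeterminedBy ((dualLeftCluster · x₀ x₁ y₀ y₁) ⁻¹' {a})
      {e ∈ edgesIn (box x₀ x₁ y₀ y₁) | src (dualEdge.symm e) ∈ a ∨ tgt (dualEdge.symm e) ∈ a} := by
  rintro O O' hO rfl
  refine reachSet_congr fun e he ↦ ?_
  have h := congrArg (dualEdge e ∈ ·) hO
  simp only [Set.mem_inter_iff, Set.mem_ofPred_eq, Equiv.symm_apply_apply, eq_iff_iff] at h ⊢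
  have he' : src e ∈ dualLeftCluster O x₀ x₁ y₀ y₁ ∨ tgt e ∈ dualLeftCluster O x₀ x₁ y₀ y₁ := he
  tauto

lemma finite_range_dualLeftCluster (x₀ x₁ y₀ y₁ : ℤ) :
    (Set.range (dualLeftCluster · x₀ x₁ y₀ y₁)).Finite := by
  refine ((finite_edgesIn_box x₀ x₁ y₀ y₁).finite_subsets.image
    (dualLeftCluster · x₀ x₁ y₀ y₁)).subset ?_
  rintro _ ⟨O, rfl⟩
  refine ⟨O ∩ edgesIn (box x₀ x₁ y₀ y₁), Set.inter_subset_right, ?_⟩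
  simp only [dualLeftCluster, Set.inter_assoc, Set.inter_self]

lemma le_measure_escapes {n : ℤ} (hn : 1 ≤ n) {a : Set V}
    (ha : ∀ f : V, f.1 = -1 → f.2 ∈ Set.Ico 0 n → f ∈ a) :
    2⁻¹ * 2⁻¹ ≤ 𝐏 {O | Escapes a (a ∪ mirror n a)
      (O ∩ edgesIn (box 0 (2 * n) 0 (2 * n))) (2 * n)} := by
  set E := edgesIn (box 0 (2 * n) 0 (2 * n))
  set μa := 𝐏 {O | Escapes a (a ∪ mirror n a) (O ∩ E) (2 * n)}
  have hmirror : 𝐏 {O | Escapes (mirror n a) (a ∪ mirror n a) (O ∩ E) (2 * n)} ≤ μa :=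
    measure_le_of_preimage (reflectSnd (2 * n)).injective
      ((determinedBy_escapes ..).measurableSet ((finite_edgesIn_box ..).sep _))
      fun _ h ↦ h.of_mirror
  have hsum : 2⁻¹ ≤ μa + μa :=
    calc 2⁻¹ ≤ 𝐏 {O | HorizCross O 0 (2 * n) 0 (2 * n)} :=
          inv_two_le_measure_horizCross (by omega)
      _ ≤ 𝐏 ({O | Escapes a (a ∪ mirror n a) (O ∩ E) (2 * n)} ∪
            {O | Escapes (mirror n a) (a ∪ mirror n a) (O ∩ E) (2 * n)}) :=
          measure_mono fun O h ↦ escapes_or_escapes_mirror (by omega) ha h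
      _ ≤ μa + μa := (measure_union_le _ _).trans (add_le_add_right hmirror _)
  calc (2⁻¹ : ℝ≥0∞) * 2⁻¹ ≤ 2⁻¹ * (μa + μa) := by gcongr
    _ = μa := by rw [mul_add, ← add_mul, ENNReal.inv_two_add_inv_two, one_mul]

lemma le_measure_teeCross {n : ℤ} (hn : 1 ≤ n) :
    2⁻¹ * (2⁻¹ * 2⁻¹) ≤ 𝐏 {O | TeeCross O n (2 * n)} := by
  set E := edgesIn (box 0 (2 * n) 0 (2 * n))
  set LA : Set Edge → Set V := (dualLeftCluster · 0 n 0 n)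
  have hdisj (a : Set V) : Disjoint
      {e ∈ edgesIn (box 0 n 0 n) | src (dualEdge.symm e) ∈ a ∨ tgt (dualEdge.symm e) ∈ a}
      {e ∈ E | ∃ v ∈ ends e, ¬Touches (a ∪ mirror n a) v} := by
    rw [Set.disjoint_left]
    rintro e ⟨-, he⟩ ⟨-, v, hv, hva⟩
    rw [← dualEdge.apply_symm_apply e] at hv
    have hface := faceAt_of_mem_ends_dualEdge hv
    exact hva <| he.elim (fun he ↦ ⟨_, .inl he, hface.1⟩) fun he ↦ ⟨_, .inl he, hface.2⟩
  have hVert : {O | VertCross O 0 n 0 n} = LA ⁻¹' {a | ∀ f ∈ a, f.1 < n} :=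
    Set.ext fun O ↦ vertCross_iff_dualLeftCluster (by omega)
  calc 2⁻¹ * (2⁻¹ * 2⁻¹) ≤ 𝐏 (LA ⁻¹' {a | ∀ f ∈ a, f.1 < n}) * (2⁻¹ * 2⁻¹) := by
        gcongr
        rw [← hVert]
        simpa using inv_two_le_measure_vertCross hn 0
    _ ≤ 𝐏 {O | LA O ∈ {a | ∀ f ∈ a, f.1 < n} ∧
          Escapes (LA O) (LA O ∪ mirror n (LA O)) (O ∩ E) (2 * n)} :=
        measure_preimage_mul_le_of_explore (finite_range_dualLeftCluster ..).countable
          (determinedBy_dualLeftCluster 0 n 0 n)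
          (fun a ↦ determinedBy_escapes a (a ∪ mirror n a) E (2 * n))
          (fun _ ↦ (finite_edgesIn_box ..).sep _) (fun _ ↦ (finite_edgesIn_box ..).sep _) hdisj
          fun O ↦ le_measure_escapes hn fun f hf ↦ mem_dualLeftCluster_of_lt (by omega)
    _ ≤ 𝐏 {O | TeeCross O n (2 * n)} := measure_mono fun O ⟨hO, h⟩ ↦
        teeCross_of_escapes (by omega) (by omega)
          ((vertCross_iff_dualLeftCluster (by omega)).2 hO) h

lemma le_measure_horizCross_of_teeCross {n : ℤ} (hn : 1 ≤ n) (k : ℤ) :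
    2⁻¹ * (2⁻¹ * 2⁻¹) * (2⁻¹ * (2⁻¹ * 2⁻¹)) * 2⁻¹ ≤
      𝐏 {O | HorizCross O k (k + 3 * n) 0 (2 * n)} := by
  have hT := localIncreasing_teeCross (n := n) (m := 2 * n) (by omega) (by omega)
  have hT' := hT.preimage (reflectFst n)
  have hH := localIncreasing_horizCross 0 n 0 n
  have hinv : 𝐏 ((reflectFst n ⁻¹' ·) ⁻¹' {O | TeeCross O n (2 * n)}) =
      𝐏 {O | TeeCross O n (2 * n)} :=
    (measurePreserving_preimage half (reflectFst n).injective).measure_preimage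
      hT.measurableSet.nullMeasurableSet
  calc _ ≤ 𝐏 {O | TeeCross O n (2 * n)} *
        𝐏 ((reflectFst n ⁻¹' ·) ⁻¹' {O | TeeCross O n (2 * n)}) * 𝐏 {O | HorizCross O 0 n 0 n} := by
        rw [hinv]
        gcongr
        · exact le_measure_teeCross hn
        · exact le_measure_teeCross hn
        · exact inv_two_le_measure_horizCross hn
    _ ≤ 𝐏 ({O | TeeCross O n (2 * n)} ∩ (reflectFst n ⁻¹' ·) ⁻¹' {O | TeeCross O n (2 * n)} ∩
        {O | HorizCross O 0 n 0 n}) :=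
        (mul_le_mul_left (hT.measure_mul_le_inter half hT') _).trans
          ((hT.inter hT').measure_mul_le_inter half hH)
    _ ≤ 𝐏 {O | HorizCross O (-n) (2 * n) 0 (2 * n)} :=
        measure_mono fun O ⟨⟨h, h'⟩, hO⟩ ↦ h.horizCross h' hO (by omega)
    _ ≤ 𝐏 {O | HorizCross O k (k + 3 * n) 0 (2 * n)} :=
        (measure_horizCross_translate (k + n) 0 ..).trans_eq (by ring_nf)

lemma le_measure_horizCross_glue {b e f n : ℤ} {c : ℝ≥0∞} (hn : 1 ≤ n) (he : 0 ≤ e)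
    (heb : e + n = b) (hbf : b ≤ f) (hb : c ≤ 𝐏 {O | HorizCross O 0 b 0 n})
    (hf : c ≤ 𝐏 {O | HorizCross O e f 0 n}) :
    c * 2⁻¹ * c ≤ 𝐏 {O | HorizCross O 0 f 0 n} := by
  have hB := localIncreasing_horizCross 0 b 0 n
  have hV := localIncreasing_vertCross e (e + n) 0 n
  calc c * 2⁻¹ * c ≤ 𝐏 {O | HorizCross O 0 b 0 n} * 𝐏 {O | VertCross O e (e + n) 0 n} *
        𝐏 {O | HorizCross O e f 0 n} := by
        gcongr
        exact inv_two_le_measure_vertCross hn e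
    _ ≤ 𝐏 ({O | HorizCross O 0 b 0 n} ∩ {O | VertCross O e (e + n) 0 n} ∩
        {O | HorizCross O e f 0 n}) :=
        (mul_le_mul_left (hB.measure_mul_le_inter half hV) _).trans
          ((hB.inter hV).measure_mul_le_inter half (localIncreasing_horizCross ..))
    _ ≤ 𝐏 {O | HorizCross O 0 f 0 n} :=
        measure_mono fun O ⟨⟨hb, hv⟩, hf⟩ ↦ hb.glue hv hf (by omega) he le_rfl heb.le hbf

/-- The Russo–Seymour–Welsh theorem for rectangles of aspect ratio three. -/
lemma exists_le_measure_horizCross :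
    ∃ c : ℝ≥0∞, 0 < c ∧ ∀ n : ℤ, 1 ≤ n → c ≤ 𝐏 {O | HorizCross O 0 (6 * n) 0 (2 * n)} := by
  set c : ℝ≥0∞ := 2⁻¹ * (2⁻¹ * 2⁻¹) * (2⁻¹ * (2⁻¹ * 2⁻¹)) * 2⁻¹
  refine ⟨c * 2⁻¹ * c * 2⁻¹ * (c * 2⁻¹ * c), by simp [c, pos_iff_ne_zero], fun n hn ↦ ?_⟩
  have hfour : c * 2⁻¹ * c ≤ 𝐏 {O | HorizCross O 0 (4 * n) 0 (2 * n)} :=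
    le_measure_horizCross_glue (b := 3 * n) (e := n) (by omega) (by omega) (by omega) (by omega)
      (by simpa using le_measure_horizCross_of_teeCross hn 0)
      ((le_measure_horizCross_of_teeCross hn n).trans_eq (by ring_nf))
  exact le_measure_horizCross_glue (b := 4 * n) (e := 2 * n) (by omega) (by omega) (by omega)
    (by omega) hfour (hfour.trans ((measure_horizCross_translate (2 * n) 0 ..).trans_eq
      (by ring_nf)))

lemma setOf_circuit (a : ℤ) : {O | Circuit O a} =
    {O | HorizCross O (-(3 * a)) (3 * a) (-(3 * a)) (-a)} ∩
      {O | HorizCross O (-(3 * a)) (3 * a) a (3 * a)} ∩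
      ({O | VertCross O (-(3 * a)) (-a) (-(3 * a)) (3 * a)} ∩
      {O | VertCross O a (3 * a) (-(3 * a)) (3 * a)}) :=
  Set.ext fun _ ↦ ⟨fun h ↦ ⟨⟨h.1, h.2⟩, h.3, h.4⟩, fun h ↦ ⟨h.1.1, h.1.2, h.2.1, h.2.2⟩⟩

lemma exists_le_measure_circuit :
    ∃ c : ℝ≥0∞, 0 < c ∧ ∀ n : ℤ, 1 ≤ n → c ≤ 𝐏 {O | Circuit O n} := by
  obtain ⟨c, hc, hH⟩ := exists_le_measure_horizCross
  refine ⟨c * c * (c * c), by simp [hc.ne', pos_iff_ne_zero], fun n hn ↦ ?_⟩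
  have hhoriz (l : ℤ) : c ≤ 𝐏 {O | HorizCross O (-(3 * n)) (3 * n) l (l + 2 * n)} :=
    (hH n hn).trans ((measure_horizCross_translate (-(3 * n)) l ..).trans_eq (by ring_nf))
  have hvert (l : ℤ) : c ≤ 𝐏 {O | VertCross O l (l + 2 * n) (-(3 * n)) (3 * n)} :=
    (hhoriz l).trans (measure_horizCross_le_vertCross ..)
  have hlow : -(3 * n) + 2 * n = -n := by ring
  have hhigh : n + 2 * n = 3 * n := by ring
  rw [setOf_circuit]
  refine le_trans ?_ (LocalIncreasing.measure_mul_le_inter half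
    ((localIncreasing_horizCross ..).inter (localIncreasing_horizCross ..))
    ((localIncreasing_vertCross ..).inter (localIncreasing_vertCross ..)))
  gcongr
  · refine le_trans ?_ ((localIncreasing_horizCross ..).measure_mul_le_inter half
      (localIncreasing_horizCross ..))
    gcongr
    · exact hlow ▸ hhoriz (-(3 * n))
    · exact hhigh ▸ hhoriz n
  · refine le_trans ?_ ((localIncreasing_vertCross ..).measure_mul_le_inter half
      (localIncreasing_vertCross ..))
    gcongr
    · exact hlow ▸ hvert (-(3 * n))
    · exact hhigh ▸ hvert n

/-! ### Circuits at infinitely many scales -/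

/-- The edges that start in the square annulus `[-3a, 3a]² \ (-a, a)²`, on which the event
`Circuit O a` depends. -/
def annulus (a : ℤ) : Set Edge :=
  {e ∈ edgesIn (box (-(3 * a)) (3 * a) (-(3 * a)) (3 * a)) |
    ¬((src e).1 ∈ Set.Ioo (-a) a ∧ (src e).2 ∈ Set.Ioo (-a) a)}

lemma finite_annulus (a : ℤ) : (annulus a).Finite := (finite_edgesIn_box ..).sep _

lemma edgesIn_box_subset_annulus {a x₀ x₁ y₀ y₁ : ℤ} (hx₀ : -(3 * a) ≤ x₀) (hx₁ : x₁ ≤ 3 * a)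
    (hy₀ : -(3 * a) ≤ y₀) (hy₁ : y₁ ≤ 3 * a) (h : x₁ ≤ -a ∨ a ≤ x₀ ∨ y₁ ≤ -a ∨ a ≤ y₀) :
    edgesIn (box x₀ x₁ y₀ y₁) ⊆ annulus a := by
  refine fun e he ↦ ⟨edgesIn_mono (box_subset_box hx₀ hx₁ hy₀ hy₁) he, fun hsrc ↦ ?_⟩
  have := mem_box.1 (mem_edgesIn.1 he).1
  simp only [Set.mem_Ioo] at hsrc
  omega

lemma determinedBy_circuit {a : ℤ} (ha : 0 < a) :
    DeterminedBy {O | Circuit O a} (annulus a) := by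
  rw [setOf_circuit]
  refine .inter (.inter ((determinedBy_horizCross ..).mono ?_)
    ((determinedBy_horizCross ..).mono ?_)) (.inter ((determinedBy_vertCross ..).mono ?_)
    ((determinedBy_vertCross ..).mono ?_)) <;>
  exact edgesIn_box_subset_annulus (by omega) (by omega) (by omega) (by omega) (by omega)

lemma measurableSet_circuit {a : ℤ} (ha : 0 < a) : MeasurableSet {O | Circuit O a} :=
  (determinedBy_circuit ha).measurableSet (finite_annulus a)

lemma disjoint_annulus {a b : ℤ} (h : 3 * a < b) : Disjoint (annulus a) (annulus b) := by
  refine Set.disjoint_left.2 fun e ⟨ha, _⟩ ⟨_, hb⟩ ↦ hb ?_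
  have := mem_box.1 (mem_edgesIn.1 ha).1
  simp only [Set.mem_Ioo]
  omega

lemma three_mul_ten_pow_lt {i j : ℕ} (h : i < j) : 3 * (10 : ℤ) ^ i < 10 ^ j :=
  calc 3 * (10 : ℤ) ^ i < 10 ^ (i + 1) := by rw [pow_succ']; gcongr; norm_num
    _ ≤ 10 ^ j := pow_le_pow_right₀ (by norm_num) h

lemma iIndepSet_circuit : iIndepSet (fun j : ℕ ↦ {O | Circuit O (10 ^ j)}) 𝐏 := by
  refine iIndepSet_of_determinedBy half (fun j ↦ determinedBy_circuit (by positivity))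
    (fun j ↦ finite_annulus _) fun i j hij ↦ ?_
  rcases hij.lt_or_gt with h | h
  · exact disjoint_annulus (three_mul_ten_pow_lt h)
  · exact (disjoint_annulus (three_mul_ten_pow_lt h)).symm

lemma ae_frequently_circuit : ∀ᵐ O ∂𝐏, ∃ᶠ j : ℕ in Filter.atTop, Circuit O (10 ^ j) := by
  obtain ⟨c, hc, hcirc⟩ := exists_le_measure_circuit
  have hmeas (j : ℕ) : MeasurableSet {O | Circuit O (10 ^ j)} :=
    measurableSet_circuit (by positivity)
  have hsum : ∑' j : ℕ, 𝐏 {O | Circuit O (10 ^ j)} = ∞ := by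
    refine top_le_iff.1 ((ENNReal.tsum_const_eq_top_of_ne_zero (α := ℕ) hc.ne').symm.trans_le ?_)
    exact ENNReal.tsum_le_tsum fun j ↦ hcirc _ (one_le_pow₀ (by norm_num))
  have hlimsup := (prob_compl_eq_zero_iff (.measurableSet_limsup hmeas)).2
    (measure_limsup_eq_one hmeas iIndepSet_circuit hsum)
  filter_upwards [mem_ae_iff.2 hlimsup] with O hO
  exact Filter.mem_limsup_iff_frequently_mem.1 hO

lemma ae_frequently_circuit_dualConfig :
    ∀ᵐ O ∂𝐏, ∃ᶠ j : ℕ in Filter.atTop, Circuit (dualConfig O) (10 ^ j) :=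
  measurePreserving_dualConfig.quasiMeasurePreserving.ae ae_frequently_circuit

/-- Primal circuits separated by a dual circuit lie in different clusters, and each of them is met
by every infinite cluster of the origin. -/
lemma exists_infinite_of_frequently_circuit {O : Set Edge} {α : Type*} {rep : V → α}
    (hrep : ∀ u v, rep u = rep v ↔ Reach O u v)
    (h : ∃ᶠ j : ℕ in Filter.atTop, Circuit O (10 ^ j))
    (h' : ∃ᶠ j : ℕ in Filter.atTop, Circuit (dualConfig O) (10 ^ j)) :
    ∃ S : Set α, S.Infinite ∧ ∀ F : Set Edge, {v | Reach F (0, 0) v}.Infinite →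
      ∀ s ∈ S, ∃ z, Reach F (0, 0) z ∧ rep z = s := by
  choose! u hu hua hreach using fun (j : ℕ) (hj : Circuit O (10 ^ j)) ↦
    hj.exists_reach (by positivity)
  set J : Set ℕ := {j | Circuit O (10 ^ j)}
  refine ⟨rep ∘ u '' J, fun hfin ↦ ?_, ?_⟩
  · have hJ : (⋃ s ∈ rep ∘ u '' J, J ∩ rep ∘ u ⁻¹' {s}).Infinite :=
      (Nat.frequently_atTop_iff_infinite.1 h).mono fun j hj ↦
        Set.mem_biUnion (Set.mem_image_of_mem _ hj) ⟨hj, rfl⟩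
    obtain ⟨s, hs⟩ : ∃ s, (J ∩ rep ∘ u ⁻¹' {s}).Infinite := by
      by_contra! hcon
      exact hJ (hfin.biUnion fun s _ ↦ hcon s)
    obtain ⟨j, hj, hjs⟩ := hs.nonempty
    obtain ⟨k, hjk, hk⟩ := Filter.frequently_atTop.1 h' (j + 1)
    obtain ⟨l, ⟨hl, hls⟩, hkl⟩ := hs.exists_gt k
    have hjk' := three_mul_ten_pow_lt hjk
    have hkl' := three_mul_ten_pow_lt hkl
    have huj := mem_box.1 (hu j hj)
    have hul := hua l hl
    have hmem := hk.mem_box_of_reach (by positivity) (v := u j) (by rw [mem_box]; omega)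
      ((hrep _ _).1 (hjs.trans hls.symm))
    rw [mem_box] at hmem
    omega
  · rintro F hF _ ⟨j, hj, rfl⟩
    obtain ⟨v, hv, hvbox⟩ := hF.exists_notMem_finite (finite_box ..)
    obtain ⟨z, hz, hz'⟩ := hreach j hj F v hv hvbox
    exact ⟨z, hz, ((hrep _ _).2 hz').symm⟩

/-! ### Mean size of open clusters -/

lemma measurable_reflTransGen {Ω α : Type*} [MeasurableSpace Ω] [Countable α]
    {R : Ω → α → α → Prop} (hR : ∀ a b, Measurable fun ω ↦ R ω a b) (a b : α) :
    Measurable fun ω ↦ Relation.ReflTransGen (R ω) a b := by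
  have hchain (l : List α) : Measurable fun ω ↦ l.IsChain (R ω) := by
    induction l using List.twoStepInduction with
    | nil | singleton => simp
    | cons_cons a b l _ ih => simpa using (hR a b).and (ih b)
  have heq (ω : Ω) : Relation.ReflTransGen (R ω) a b ↔
      ∃ l : List α, (a :: l).IsChain (R ω) ∧ (a :: l).getLast (by simp) = b :=
    ⟨List.exists_isChain_cons_of_relationReflTransGen,
      fun ⟨l, hl, hb⟩ ↦ List.relationReflTransGen_of_exists_isChain_cons l hl hb⟩
  simp only [heq]
  exact .exists fun l ↦ (hchain _).and measurable_const

lemma measurable_edgeAdj (u v : V) : Measurable fun O : Set Edge ↦ EdgeAdj O u v :=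
  .exists fun e ↦ (measurable_set_mem e).and measurable_const

lemma measurable_reach (u v : V) : Measurable fun O : Set Edge ↦ Reach O u v :=
  measurable_reflTransGen measurable_edgeAdj u v

lemma measure_reach_le_translate (k l : ℤ) (u v : V) :
    𝐏 {O | Reach O u v} ≤ 𝐏 {O | Reach O (u.1 + k, u.2 + l) (v.1 + k, v.2 + l)} :=
  measure_le_of_preimage (translate k l).injective (measurable_reach u v).setOf
    fun _ h ↦ h.map (ends_translate k l) fun _ ↦ id

/-- A left-right crossing of `[0, n]²` connects one of `n + 1` points to the line `x = n`. -/
lemma inv_le_tsum_measure_reach {n : ℕ} (hn : 1 ≤ n) :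
    (2 * ((n : ℝ≥0∞) + 1))⁻¹ ≤ ∑' y : ℤ, 𝐏 {O | Reach O (0, 0) ((n : ℤ), y)} := by
  set f := ∑' y : ℤ, 𝐏 {O | Reach O (0, 0) ((n : ℤ), y)}
  have hcross : {O | HorizCross O 0 n 0 n} ⊆
      ⋃ k ∈ Finset.range (n + 1), ⋃ y : ℤ, {O | Reach O (0, (k : ℤ)) ((n : ℤ), y)} := by
    rintro O ⟨⟨x, k⟩, ⟨x', y⟩, ⟨hk₀, hk₁⟩, rfl, rfl, h⟩
    lift k to ℕ using hk₀
    exact Set.mem_biUnion (Finset.mem_coe.2 (Finset.mem_range.2 (by omega)))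
      (Set.mem_iUnion.2 ⟨y, h.mono Set.inter_subset_left⟩)
  have hstart (k : ℕ) : 𝐏 (⋃ y : ℤ, {O | Reach O (0, (k : ℤ)) ((n : ℤ), y)}) ≤ f := by
    refine (measure_iUnion_le _).trans ((ENNReal.tsum_le_tsum fun y ↦
      measure_reach_le_translate 0 (-k) _ _).trans ?_)
    simpa using ENNReal.tsum_comp_le_tsum_of_injective (add_left_injective (-(k : ℤ)))
      fun y ↦ 𝐏 {O | Reach O (0, 0) ((n : ℤ), y)}
  have hhalf : 2⁻¹ ≤ ((n : ℝ≥0∞) + 1) * f :=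
    calc 2⁻¹ ≤ 𝐏 {O | HorizCross O 0 n 0 n} :=
          inv_two_le_measure_horizCross (by exact_mod_cast hn)
      _ ≤ ∑ k ∈ Finset.range (n + 1), 𝐏 (⋃ y : ℤ, {O | Reach O (0, (k : ℤ)) ((n : ℤ), y)}) :=
          (measure_mono hcross).trans (measure_biUnion_finset_le _ _)
      _ ≤ ((n : ℝ≥0∞) + 1) * f := (Finset.sum_le_sum fun k _ ↦ hstart k).trans_eq (by simp)
  rw [ENNReal.mul_inv (by simp) (by simp), ← div_eq_mul_inv]
  exact ENNReal.div_le_of_le_mul' hhalf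

lemma tsum_inv_two_mul_eq_top : ∑' n : ℕ, (2 * (((n + 1 : ℕ) : ℝ≥0∞) + 1))⁻¹ = ∞ := by
  by_contra h
  refine Real.not_summable_natCast_inv ((summable_nat_add_iff 2).1 ?_)
  refine ((ENNReal.summable_toReal h).mul_left 2).congr fun n ↦ ?_
  rw [← Nat.cast_succ, ENNReal.toReal_inv, ENNReal.toReal_mul, ENNReal.toReal_natCast,
    ENNReal.toReal_ofNat, mul_inv, mul_inv_cancel_left₀ two_ne_zero]

lemma tsum_measure_reach : ∑' v : V, 𝐏 {O | Reach O (0, 0) v} = ∞ := by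
  refine top_le_iff.1 ?_
  rw [← tsum_inv_two_mul_eq_top, ENNReal.tsum_prod']
  exact (ENNReal.tsum_le_tsum fun n ↦ inv_le_tsum_measure_reach (n := n + 1) (by omega)).trans
    (ENNReal.tsum_comp_le_tsum_of_injective (f := fun n : ℕ ↦ ((n + 1 : ℕ) : ℤ))
      (fun _ _ h ↦ by simpa using h) fun x ↦ ∑' y : ℤ, 𝐏 {O | Reach O (0, 0) (x, y)})

/-! ### Independent uniform variables from digits -/

section Digits

lemma base_eq_restrict_Ico : base = volume.restrict (Set.Ico 0 1) :=
  Measure.restrict_congr_set Ico_ae_eq_Ioc.symm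

instance isProbabilityMeasure_base : IsProbabilityMeasure base :=
  ⟨by simp [base]⟩

lemma ae_base_mem_Ico : ∀ᵐ x ∂base, x ∈ Set.Ico (0 : ℝ) 1 :=
  base_eq_restrict_Ico ▸ ae_restrict_mem measurableSet_Ico

lemma eq_infinitePi_of_map_head_tail {α : Type*} [MeasurableSpace α] {κ : Measure α}
    [IsProbabilityMeasure κ] {Q : Measure (ℕ → α)} [IsProbabilityMeasure Q]
    (hQ : Q.map (fun s ↦ (s 0, fun k ↦ s (k + 1))) = κ.prod Q) :
    Q = Measure.infinitePi fun _ ↦ κ := by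
  have hcyl (n : ℕ) (t : ℕ → Set α) (ht : ∀ i, MeasurableSet (t i)) :
      Q {s | ∀ i < n, s i ∈ t i} = ∏ i ∈ Finset.range n, κ (t i) := by
    induction n generalizing t with
    | zero => simp
    | succ n ih =>
      have hpre : {s : ℕ → α | ∀ i < n + 1, s i ∈ t i} =
          (fun s ↦ (s 0, fun k ↦ s (k + 1))) ⁻¹' t 0 ×ˢ {s | ∀ i < n, s i ∈ t (i + 1)} := by
        ext s
        simp only [Nat.forall_lt_succ_left]
        rfl
      have hmeas : MeasurableSet {s : ℕ → α | ∀ i < n, s i ∈ t (i + 1)} := by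
        simp only [Set.ofPred_forall]
        exact .iInter fun i ↦ .iInter fun _ ↦ measurable_pi_apply i (ht _)
      rw [hpre, ← Measure.map_apply (by fun_prop) ((ht 0).prod hmeas), hQ, Measure.prod_prod,
        ih _ fun i ↦ ht (i + 1), Finset.prod_range_succ']
      exact mul_comm _ _
  classical
  refine Measure.eq_infinitePi _ fun s t ht ↦ ?_
  obtain ⟨n, hn⟩ := s.exists_nat_subset_range
  have hpi : Set.pi s t = {x | ∀ i < n, x i ∈ if i ∈ s then t i else Set.univ} := by
    ext x
    refine ⟨fun hx i _ ↦ ?_, fun hx i (hi : i ∈ s) ↦ ?_⟩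
    · split_ifs with hi
      exacts [hx i hi, trivial]
    · simpa only [if_pos hi] using hx i (Finset.mem_range.1 (hn hi))
  rw [hpi, hcyl n _ fun i ↦ by split_ifs; exacts [ht i, .univ], ← Finset.prod_subset hn]
  · exact Finset.prod_congr rfl fun i hi ↦ by rw [if_pos hi]
  · exact fun i _ hi ↦ by rw [if_neg hi, measure_univ]

variable {b : ℕ} [NeZero b]

lemma digits_zero_eq_iff {x : ℝ} (hx : x ∈ Set.Ico (0 : ℝ) 1) (d : Fin b) :
    Real.digits x b 0 = d ↔ x * b - d ∈ Set.Ico (0 : ℝ) 1 := by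
  have hb : (0 : ℝ) < b := Nat.cast_pos.2 (NeZero.pos b)
  have hxb : 0 ≤ x * b := mul_nonneg hx.1 hb.le
  have hlt : ⌊x * b⌋₊ < b := (Nat.floor_lt hxb).2 (mul_lt_of_lt_one_left hb hx.2)
  rw [Real.digits, zero_add, pow_one, Fin.ext_iff, Fin.val_ofNat, Nat.mod_eq_of_lt hlt,
    Nat.floor_eq_iff hxb, Set.mem_Ico, sub_nonneg, sub_lt_iff_lt_add']

lemma digits_zero_eq_and_fract_mem_iff {x : ℝ} {d : Fin b} {T : Set ℝ} :
    (Real.digits x b 0 = d ∧ Int.fract (x * b) ∈ T) ∧ x ∈ Set.Ico (0 : ℝ) 1 ↔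
      x * b - d ∈ T ∩ Set.Ico 0 1 := by
  have hfract (h : x * b - d ∈ Set.Ico (0 : ℝ) 1) : Int.fract (x * b) = x * b - d :=
    Int.fract_eq_iff.2 ⟨h.1, h.2, d, by simp⟩
  refine ⟨fun ⟨⟨hd, hT⟩, hx⟩ ↦ ?_, fun ⟨hT, hxd⟩ ↦ ?_⟩
  · have hxd := (digits_zero_eq_iff hx d).1 hd
    exact ⟨hfract hxd ▸ hT, hxd⟩
  · have hx : x ∈ Set.Ico (0 : ℝ) 1 := by
      have hd : (d : ℝ) + 1 ≤ b := by exact_mod_cast d.isLt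
      have : (0 : ℝ) ≤ d := Nat.cast_nonneg _
      have := hxd.1
      have := hxd.2
      constructor <;> by_contra! <;> nlinarith
    exact ⟨⟨(digits_zero_eq_iff hx d).2 hxd, (hfract hxd).symm ▸ hT⟩, hx⟩

lemma digits_succ {x : ℝ} (hx : 0 ≤ x) (k : ℕ) :
    Real.digits x b (k + 1) = Real.digits (Int.fract (x * b)) b k := by
  have hsplit : x * b ^ (k + 1 + 1) =
      Int.fract (x * b) * b ^ (k + 1) + (b * (⌊x * b⌋₊ * b ^ k) : ℕ) := by
    have hfloor : (⌊x * b⌋₊ : ℝ) = ⌊x * b⌋ := natCast_floor_eq_intCast_floor (by positivity)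
    push_cast
    rw [hfloor, Int.fract]
    ring
  rw [Real.digits, Real.digits, hsplit, Nat.floor_add_natCast
    (mul_nonneg (Int.fract_nonneg _) (by positivity)), Fin.ext_iff, Fin.val_ofNat, Fin.val_ofNat,
    Nat.add_mul_mod_self_left]

lemma measurable_digits : Measurable fun x ↦ Real.digits x b :=
  measurable_pi_iff.2 fun _ ↦ Measurable.of_discrete.comp
    (Nat.measurable_floor.comp (measurable_id.mul_const _))

lemma measurable_digits_zero_fract : Measurable fun x ↦ (Real.digits x b 0, Int.fract (x * b)) :=
  ((measurable_pi_apply 0).comp measurable_digits).prodMk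
    (measurable_fract.comp (measurable_id.mul_const _))

lemma map_digits_zero_fract : base.map (fun x ↦ (Real.digits x b 0, Int.fract (x * b))) =
    (uniformOn (Set.univ : Set (Fin b))).prod base := by
  have hb : (0 : ℝ) < b := Nat.cast_pos.2 (NeZero.pos b)
  have hcell (d : Fin b) (T : Set ℝ) :
      base ((fun x ↦ (Real.digits x b 0, Int.fract (x * b))) ⁻¹' {d} ×ˢ T) =
        uniformOn Set.univ {d} * base T := by
    have hpre : (fun x ↦ (Real.digits x b 0, Int.fract (x * b))) ⁻¹' {d} ×ˢ T ∩ Set.Ico 0 1 =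
        (· * (b : ℝ)) ⁻¹' ((· + (-(d : ℝ))) ⁻¹' (T ∩ Set.Ico 0 1)) :=
      Set.ext fun x ↦ digits_zero_eq_and_fract_mem_iff
    rw [base_eq_restrict_Ico, Measure.restrict_apply' measurableSet_Ico,
      Measure.restrict_apply' measurableSet_Ico, hpre, Real.volume_preimage_mul_right hb.ne',
      measure_preimage_add_right, uniformOn_univ, Measure.count_singleton, Fintype.card_fin,
      abs_of_pos (inv_pos.2 hb), ENNReal.ofReal_inv_of_pos hb, ENNReal.ofReal_natCast, one_div]
  refine (Measure.prod_eq fun s T _ hT ↦ ?_).symm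
  calc base.map _ (s ×ˢ T) = (base.map _).restrict (Prod.snd ⁻¹' T) (Prod.fst ⁻¹' s) := by
        rw [Measure.restrict_apply' (measurable_snd hT), Set.prod_eq]
    _ = ∑' d : s, uniformOn Set.univ {(d : Fin b)} * base T := by
        rw [← tsum_measure_preimage_singleton s.to_countable fun d _ ↦ measurable_fst .of_discrete]
        refine tsum_congr fun d ↦ ?_
        rw [Measure.restrict_apply' (measurable_snd hT), ← Set.prod_eq,
          Measure.map_apply measurable_digits_zero_fract (.prod .of_discrete hT), hcell d T]
    _ = uniformOn Set.univ s * base T := by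
        rw [ENNReal.tsum_mul_right]
        exact congrArg (· * base T)
          (tsum_measure_preimage_singleton (f := id) s.to_countable fun _ _ ↦ .of_discrete)

lemma measurePreserving_digits : MeasurePreserving (fun x ↦ Real.digits x b) base
    (Measure.infinitePi fun _ ↦ uniformOn (Set.univ : Set (Fin b))) := by
  have hprob := Measure.isProbabilityMeasure_map (μ := base)
    (measurable_digits (b := b)).aemeasurable
  refine ⟨measurable_digits, eq_infinitePi_of_map_head_tail ?_⟩
  have hsplit : (fun s : ℕ → Fin b ↦ (s 0, fun k ↦ s (k + 1))) ∘ (fun x ↦ Real.digits x b) =ᵐ[base]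
      Prod.map id (fun x ↦ Real.digits x b) ∘ fun x ↦ (Real.digits x b 0, Int.fract (x * b)) := by
    filter_upwards [ae_base_mem_Ico] with x hx
    exact Prod.ext rfl (funext (digits_succ hx.1))
  rw [Measure.map_map (by fun_prop) measurable_digits, Measure.map_congr hsplit,
    ← Measure.map_map (measurable_id.prodMap measurable_digits)
      measurable_digits_zero_fract, map_digits_zero_fract,
    ← Measure.map_prod_map _ _ measurable_id measurable_digits, Measure.map_id]

lemma measurePreserving_ofDigits (hb : 1 < b) : MeasurePreserving Real.ofDigits
    (Measure.infinitePi fun _ ↦ uniformOn (Set.univ : Set (Fin b))) base := by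
  have hinv : id =ᵐ[base] Real.ofDigits ∘ fun x ↦ Real.digits x b := by
    filter_upwards [ae_base_mem_Ico] with x hx
    exact (Real.ofDigits_digits hb hx).symm
  have hmeas : Measurable (Real.ofDigits (b := b)) := Real.continuous_ofDigits.measurable
  rw [← measurePreserving_digits.map_eq]
  exact ((MeasurePreserving.id base).congr (hmeas.comp measurable_digits) hinv).map_of_comp hmeas
    measurable_digits

lemma unif_eq_ofDigits (i : ℕ) {x : ℝ} (hx : 0 ≤ x) :
    unif i x = Real.ofDigits fun k ↦ Real.digits x 2 (Nat.pair i k) := by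
  refine tsum_congr fun k ↦ ?_
  have hfloor : ⌊x * 2 ^ (Nat.pair i k + 1)⌋ = ⌊x * 2 ^ (Nat.pair i k + 1)⌋₊ :=
    (Int.natCast_floor_eq_floor (by positivity)).symm
  simp only [Real.ofDigitsTerm, Real.digits, bit, boolOf, hfloor, decide_eq_true_eq,
    Fin.val_ofNat, Nat.cast_ofNat]
  generalize ⌊x * 2 ^ (Nat.pair i k + 1)⌋₊ = n
  norm_cast
  rcases Nat.mod_two_eq_zero_or_one n with h | h <;> simp [h]

lemma measurable_unif (i : ℕ) : Measurable (unif i) := by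
  refine Measurable.tsum fun k ↦ .ite ?_ measurable_const measurable_const
  have hfloor : Measurable fun x : ℝ ↦ ⌊x * 2 ^ (Nat.pair i k + 1)⌋ :=
    Int.measurable_floor.comp (measurable_id.mul_const _)
  simp only [bit, boolOf, decide_eq_true_eq]
  exact hfloor (.of_discrete (s := {n | n % 2 = 1}))

lemma measurePreserving_unif :
    MeasurePreserving (fun x i ↦ unif i x) base (Measure.infinitePi fun _ : ℕ ↦ base) := by
  let κ : Measure (Fin 2) := uniformOn Set.univ
  have hmeas : Measurable (Real.ofDigits (b := 2)) := Real.continuous_ofDigits.measurable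
  have hrows : MeasurePreserving (fun (s : ℕ → Fin 2) i ↦ Real.ofDigits fun k ↦ s (Nat.pair i k))
      (Measure.infinitePi fun _ ↦ κ) (Measure.infinitePi fun _ ↦ base) := by
    have hpair := Measure.map_infinitePi_infinitePi_of_inj (P := fun _ : ℕ ↦ κ)
      (f := fun z : ℕ × ℕ ↦ Nat.pair z.1 z.2) Nat.pairEquiv.injective
    have hrow := Measure.infinitePi_map_pi (fun _ : ℕ ↦ Measure.infinitePi fun _ : ℕ ↦ κ)
      (f := fun _ ↦ Real.ofDigits) fun _ ↦ hmeas
    rw [(measurePreserving_ofDigits one_lt_two).map_eq] at hrow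
    refine ⟨by fun_prop, ?_⟩
    rw [← hrow, ← Measure.infinitePi_map_curry, ← hpair, Measure.map_map (by fun_prop)
      (MeasurableEquiv.measurable _), Measure.map_map (by fun_prop) (by fun_prop)]
    rfl
  refine (hrows.comp measurePreserving_digits).congr
    (measurable_pi_iff.2 measurable_unif) ?_
  filter_upwards [ae_base_mem_Ico] with x hx
  exact funext fun i ↦ (unif_eq_ofDigits i hx.1).symm

end Digits

lemma measurePreserving_sumPiEquivProdPi {ι ι' : Type*} {X : ι ⊕ ι' → Type*}
    [∀ i, MeasurableSpace (X i)] (μ : ∀ i, Measure (X i)) [∀ i, IsProbabilityMeasure (μ i)] :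
    MeasurePreserving (MeasurableEquiv.sumPiEquivProdPi X) (Measure.infinitePi μ)
      ((Measure.infinitePi fun i ↦ μ (.inl i)).prod (Measure.infinitePi fun i ↦ μ (.inr i))) := by
  refine MeasurePreserving.symm (MeasurableEquiv.sumPiEquivProdPi X).symm
    ⟨MeasurableEquiv.measurable _, Measure.eq_infinitePi _ fun s t ht ↦ ?_⟩
  have hpre : (MeasurableEquiv.sumPiEquivProdPi X).symm ⁻¹' Set.pi s t =
      Set.pi s.toLeft (fun i ↦ t (.inl i)) ×ˢ Set.pi s.toRight fun i ↦ t (.inr i) := by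
    ext z
    simp [Set.mem_pi, MeasurableEquiv.sumPiEquivProdPi]
  rw [MeasurableEquiv.map_apply, hpre, Measure.prod_prod, Measure.infinitePi_pi _ fun _ _ ↦ ht _,
    Measure.infinitePi_pi _ fun _ _ ↦ ht _]
  conv_rhs => rw [← Finset.toLeft_disjSum_toRight (u := s), Finset.prod_disjSum]

lemma map_lt_base (p : I) : base.map (· < (p : ℝ)) = bernoulliMeasure True False p := by
  have hlt : Measurable (· < (p : ℝ)) := measurable_id.lt measurable_const
  refine Measure.ext_of_singleton fun P ↦ ?_
  rw [Measure.map_apply hlt .of_discrete, base_eq_restrict_Ico,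
    Measure.restrict_apply' measurableSet_Ico]
  rcases Classical.propComplete P with rfl | rfl
  · have hpre : (· < (p : ℝ)) ⁻¹' {True} ∩ Set.Ico 0 1 = Set.Ico (0 : ℝ) p := by
      ext x
      simp only [Set.mem_inter_iff, Set.mem_preimage, Set.mem_singleton_iff, eq_iff_iff, iff_true,
        Set.mem_Ico]
      grind [p.2.2]
    rw [hpre, Real.volume_Ico, bernoulliMeasure_apply_of_mem_of_notMem p .of_discrete
      (Set.mem_singleton _) (by simp), sub_zero]
    exact ENNReal.ofReal_eq_coe_nnreal p.2.1
  · have hpre : (· < (p : ℝ)) ⁻¹' {False} ∩ Set.Ico 0 1 = Set.Ico (p : ℝ) 1 := by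
      ext x
      simp only [Set.mem_inter_iff, Set.mem_preimage, Set.mem_singleton_iff, eq_iff_iff, iff_false,
        not_lt, Set.mem_Ico]
      grind [p.2.1]
    rw [hpre, Real.volume_Ico, bernoulliMeasure_apply_of_notMem_of_mem p .of_discrete (by simp)
      (Set.mem_singleton _)]
    exact ENNReal.ofReal_eq_coe_nnreal (σ p).2.1

lemma measurePreserving_setOf_lt {ι : Type*} (p : I) :
    MeasurePreserving (fun U : ι → ℝ ↦ {i | U i < p}) (Measure.infinitePi fun _ ↦ base)
      setBer(Set.univ, p) := by
  have hlt : Measurable (· < (p : ℝ)) := measurable_id.lt measurable_const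
  have hpi : Measurable fun (U : ι → ℝ) i ↦ U i < p := by fun_prop
  refine ⟨measurable_setOf_apply.comp hpi, ?_⟩
  rw [setBernoulli_univ, ← map_lt_base, ← Measure.infinitePi_map_pi (fun _ : ι ↦ base)
    fun _ ↦ hlt, Measure.map_map measurable_setOf_apply (by fun_prop)]
  rfl

/-! ### Colouring clusters independently -/

lemma boolOf_eq_true {P : Prop} : boolOf P = true ↔ P := by
  simp only [boolOf, decide_eq_true_eq]

lemma sqAdj_iff_exists_ends_eq {u v : V} : SqAdj u v ↔ ∃ e, ends e = s(u, v) := by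
  obtain ⟨a, b⟩ := u
  obtain ⟨c, d⟩ := v
  constructor
  · intro h
    change (a - c) ^ 2 + (b - d) ^ 2 = 1 at h
    have hx := Int.abs_le_one_iff.1 ((sq_le_one_iff_abs_le_one (a - c)).1 (by nlinarith))
    have hy := Int.abs_le_one_iff.1 ((sq_le_one_iff_abs_le_one (b - d)).1 (by nlinarith))
    have hcases : (c = a + 1 ∧ d = b) ∨ (a = c + 1 ∧ b = d) ∨ (c = a ∧ d = b + 1) ∨
        (a = c ∧ b = d + 1) := by
      rcases hx with hx | hx | hx <;> rcases hy with hy | hy | hy <;> rw [hx, hy] at h <;> omega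
    rcases hcases with ⟨rfl, rfl⟩ | ⟨rfl, rfl⟩ | ⟨rfl, rfl⟩ | ⟨rfl, rfl⟩
    exacts [⟨(a, d, false), rfl⟩, ⟨(c, b, false), Sym2.eq_swap⟩, ⟨(c, b, true), rfl⟩,
      ⟨(a, d, true), Sym2.eq_swap⟩]
  · rintro ⟨⟨x, y, _ | _⟩, he⟩ <;>
    · simp only [ends, src_mk, tgt_mk_false, tgt_mk_true, Sym2.eq_iff, Prod.mk.injEq] at he
      rcases he with ⟨⟨rfl, rfl⟩, rfl, rfl⟩ | ⟨⟨rfl, rfl⟩, rfl, rfl⟩ <;> simp [SqAdj]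

lemma EdgeAdj.sqAdj {O : Set Edge} {u v : V} (h : EdgeAdj O u v) : SqAdj u v :=
  sqAdj_iff_exists_ends_eq.2 (h.imp fun _ ↦ And.right)

/-- The edges both of whose ends have colour `c`. -/
def monoEdges (ξ : ColourCfg) (c : Bool) : Set Edge := {e | ∀ v ∈ ends e, ξ v = c}

lemma monoConn_sqAdj (ξ : ColourCfg) (c : Bool) :
    MonoConn SqAdj ξ c = Reach (monoEdges ξ c) := by
  have hadj (u v : V) : (SqAdj u v ∧ ξ u = c ∧ ξ v = c) = EdgeAdj (monoEdges ξ c) u v := by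
    refine propext ⟨fun ⟨huv, hu, hv⟩ ↦ ?_, fun h ↦ ⟨h.sqAdj, ?_⟩⟩
    · obtain ⟨e, he⟩ := sqAdj_iff_exists_ends_eq.1 huv
      exact ⟨e, fun w hw ↦ by rcases Sym2.mem_iff.1 (he ▸ hw) with rfl | rfl <;> assumption, he⟩
    · obtain ⟨e, hc, he⟩ := h
      exact ⟨hc u (he ▸ Sym2.mem_mk_left ..), hc v (he ▸ Sym2.mem_mk_right ..)⟩
  funext u v
  simp only [MonoConn, Reach, hadj]

lemma eq_of_reach_monoEdges {ξ : ColourCfg} {c : Bool} {u v : V} (hu : ξ u = c)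
    (h : Reach (monoEdges ξ c) u v) : ξ v = c :=
  h.mem_of_mem (L := {w | ξ w = c})
    (fun _ he ↦ iff_of_true (he _ (Sym2.mem_mk_left ..)) (he _ (Sym2.mem_mk_right ..))) hu

/-- The edge configuration with set of open edges `O`. -/
noncomputable def edgeCfgOf (O : Set Edge) : EdgeCfg := fun u v ↦ boolOf (EdgeAdj O u v)

lemma pCluster_edgeCfgOf (O : Set Edge) (v : V) : pCluster (edgeCfgOf O) v = {w | Reach O v w} := by
  simp only [pCluster, Conn, edgeCfgOf, boolOf_eq_true, Reach]

lemma clusterRep_spec (O : Set Edge) (v : V) :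
    Reach O v (clusterRep (edgeCfgOf O) v) ∧ ∀ w, Reach O v w →
      Encodable.encode (clusterRep (edgeCfgOf O) v) ≤ Encodable.encode w := by
  obtain ⟨w, hw, hmin⟩ := Nat.sInf_mem
    (s := Encodable.encode '' {w | Reach O v w}) ⟨_, v, .refl O v, rfl⟩
  have hrep : clusterRep (edgeCfgOf O) v = w := by
    rw [clusterRep, pCluster_edgeCfgOf, ← hmin, Encodable.encodek, Option.getD_some]
  rw [hrep, hmin]
  exact ⟨hw, fun w' hw' ↦ Nat.sInf_le ⟨w', hw', rfl⟩⟩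

lemma clusterRep_eq_iff {O : Set Edge} {v w : V} :
    clusterRep (edgeCfgOf O) v = w ↔
      Reach O v w ∧ ∀ w', Reach O v w' → Encodable.encode w ≤ Encodable.encode w' := by
  have hspec := clusterRep_spec O v
  refine ⟨fun h ↦ h ▸ hspec, fun ⟨hw, hmin⟩ ↦ Encodable.encode_injective ?_⟩
  exact le_antisymm (hspec.2 w hw) (hmin _ hspec.1)

lemma clusterRep_eq_clusterRep_iff {O : Set Edge} {u v : V} :
    clusterRep (edgeCfgOf O) u = clusterRep (edgeCfgOf O) v ↔ Reach O u v := by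
  have hv := clusterRep_spec O v
  refine ⟨fun h ↦ (clusterRep_eq_iff.1 h).1.trans hv.1.symm, fun h ↦ ?_⟩
  exact clusterRep_eq_iff.2 ⟨h.trans hv.1, fun w hw ↦ hv.2 w (h.symm.trans hw)⟩

/-- The configuration in which the edges of `O` are open and a cluster is black if and only if its
representative lies in `B`. -/
noncomputable def assemble (ω : Set Edge × Set V) : Config :=
  (edgeCfgOf ω.1, fun v ↦ boolOf (clusterRep (edgeCfgOf ω.1) v ∈ ω.2))

lemma measurable_boolOf {Ω : Type*} [MeasurableSpace Ω] {P : Ω → Prop} (hP : Measurable P) :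
    Measurable fun ω ↦ boolOf (P ω) :=
  (Measurable.of_discrete (f := boolOf)).comp hP

lemma measurable_assemble : Measurable assemble := by
  have hrep (v w : V) : Measurable fun O : Set Edge ↦ clusterRep (edgeCfgOf O) v = w := by
    simp only [clusterRep_eq_iff]
    exact (measurable_reach v w).and
      (.forall fun w' ↦ (measurable_reach v w').imp measurable_const)
  refine .prodMk (measurable_pi_lambda _ fun u ↦ measurable_pi_lambda _ fun v ↦
    measurable_boolOf ((measurable_edgeAdj u v).comp measurable_fst))
    (measurable_pi_lambda _ fun v ↦ measurable_boolOf ?_)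
  have hmem (ω : Set Edge × Set V) : clusterRep (edgeCfgOf ω.1) v ∈ ω.2 ↔
      ∃ w, clusterRep (edgeCfgOf ω.1) v = w ∧ w ∈ ω.2 := by simp
  simp only [hmem]
  exact .exists fun w ↦ ((hrep v w).comp measurable_fst).and
    ((measurable_set_mem w).comp measurable_snd)

lemma measurable_monoCluster (c : Bool) (v : V) :
    Measurable fun ω : Config ↦ monoCluster SqAdj ω.2 c v := by
  have hcol (u : V) : Measurable fun ω : Config ↦ ω.2 u = c :=
    (Measurable.of_discrete (f := (· = c))).comp ((measurable_pi_apply u).comp measurable_snd)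
  exact measurable_set_iff.2 fun w ↦ (hcol v).and
    (measurable_reflTransGen (fun a b ↦ measurable_const.and ((hcol a).and (hcol b))) v w)

/-- The index of the uniform variable that determines the state of an edge or the colour of the
cluster represented by a vertex. -/
noncomputable def labelIndex : Edge ⊕ V → ℕ :=
  Sum.elim (fun e ↦ 2 * eIdx (src e) (tgt e)) fun v ↦ 2 * Encodable.encode v + 1

lemma eIdx_eq_iff {u v u' v' : V} : eIdx u v = eIdx u' v' ↔ s(u, v) = s(u', v') := by
  refine ⟨fun h ↦ ?_, fun h ↦ ?_⟩
  · rw [Sym2.eq_iff]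
    unfold eIdx at h
    rcases min_choice (Encodable.encode (u, v)) (Encodable.encode (v, u)) with h₁ | h₁ <;>
    rcases min_choice (Encodable.encode (u', v')) (Encodable.encode (v', u')) with h₂ | h₂ <;>
    · have := Encodable.encode_injective (h₁.symm.trans (h.trans h₂))
      grind
  · rcases Sym2.eq_iff.1 h with ⟨rfl, rfl⟩ | ⟨rfl, rfl⟩
    exacts [rfl, min_comm _ _]

lemma ends_injective : Function.Injective ends := by
  rintro ⟨x, y, _ | _⟩ ⟨x', y', _ | _⟩ h <;>
    simp only [ends, src_mk, tgt_mk_false, tgt_mk_true, Sym2.eq_iff, Prod.mk.injEq, and_true,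
      reduceCtorEq, and_false] at h ⊢ <;>
    omega

lemma labelIndex_injective : Function.Injective labelIndex := by
  refine Function.Injective.sumElim (fun e e' h ↦ ?_) (fun v v' h ↦ ?_) fun e v ↦ by omega
  · exact ends_injective (eIdx_eq_iff.1 (by simpa using h))
  · exact Encodable.encode_injective (by simpa using h)

lemma measurePreserving_labels (p r : I) :
    MeasurePreserving
      (fun x ↦ ({e : Edge | edgeU (src e) (tgt e) x < p}, {v : V | vtxU v x < r})) base
      (setBer(Set.univ, p).prod setBer(Set.univ, r)) := by
  have hlabels : MeasurePreserving (fun (U : ℕ → ℝ) j ↦ U (labelIndex j))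
      (Measure.infinitePi fun _ ↦ base) (Measure.infinitePi fun _ ↦ base) :=
    ⟨by fun_prop, Measure.map_infinitePi_infinitePi_of_inj labelIndex_injective⟩
  exact ((measurePreserving_setOf_lt p).prod (measurePreserving_setOf_lt r)).comp
    ((measurePreserving_sumPiEquivProdPi fun _ ↦ base).comp
      (hlabels.comp measurePreserving_unif))

lemma edgeCfg_sqAdj (p x : ℝ) :
    edgeCfg SqAdj p x = edgeCfgOf {e | edgeU (src e) (tgt e) x < p} := by
  have hedge {e : Edge} {u v : V} (he : ends e = s(u, v)) :
      edgeU (src e) (tgt e) x = edgeU u v x := by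
    rw [edgeU, edgeU, eIdx_eq_iff.2 he]
  funext u v
  rw [Bool.eq_iff_iff, edgeCfgOf, boolOf_eq_true, edgeCfg, Bool.and_eq_true, boolOf_eq_true,
    boolOf_eq_true, sqAdj_iff_exists_ends_eq]
  refine ⟨fun ⟨⟨e, he⟩, hlt⟩ ↦ ⟨e, (hedge he).trans_lt hlt, he⟩, ?_⟩
  exact fun ⟨e, hlt, he⟩ ↦ ⟨⟨e, he⟩, (hedge he).symm.trans_lt hlt⟩

lemma dacMeasure_sqAdj (p r : I) :
    DaCMeasure SqAdj p r = (setBer(Set.univ, p).prod setBer(Set.univ, r)).map assemble := by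
  rw [← (measurePreserving_labels p r).map_eq,
    Measure.map_map measurable_assemble (measurePreserving_labels p r).measurable]
  refine congrArg (base.map ·) (funext fun x ↦ Prod.ext (edgeCfg_sqAdj p x) ?_)
  exact congrArg (fun (η : EdgeCfg) v ↦ boolOf (vtxU (clusterRep η v) x < r)) (edgeCfg_sqAdj p x)

lemma thetaSq_half_eq_zero {r : I} (hr : r < 1) : thetaSq half r = 0 := by
  have hmeas : MeasurableSet {ω : Config | (monoCluster SqAdj ω.2 true origin).Infinite} :=
    measurable_monoCluster true origin MeasurableSet.setOfPred_finite.compl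
  rw [thetaSq, percProb, dacMeasure_sqAdj, Measure.map_apply measurable_assemble hmeas,
    Measure.measure_prod_null (measurable_assemble hmeas)]
  filter_upwards [ae_frequently_circuit, ae_frequently_circuit_dualConfig] with O h h'
  obtain ⟨S, hS, hmeet⟩ :=
    exists_infinite_of_frequently_circuit (fun u v ↦ clusterRep_eq_clusterRep_iff (O := O)) h h'
  refine measure_mono_null (fun B hB ↦ Set.mem_ofPred_eq ▸ fun s hs ↦ ?_)
    (setBernoulli_superset_of_infinite hS hr)
  set ξ := (assemble (O, B)).2
  have hB : (monoCluster SqAdj ξ true origin).Infinite := hB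
  simp only [monoCluster, monoConn_sqAdj] at hB
  obtain ⟨z, hz, rfl⟩ := hmeet (monoEdges ξ true) (hB.mono fun v hv ↦ hv.2) s hs
  exact boolOf_eq_true.1 (eq_of_reach_monoEdges hB.nonempty.some_mem.1 hz)

lemma mem_monoCluster_assemble {O : Set Edge} {B : Set V} {u v : V} (h : Reach O u v)
    (hB : clusterRep (edgeCfgOf O) u ∈ B) : v ∈ monoCluster SqAdj (assemble (O, B)).2 true u := by
  have hblack {w : V} (hw : Reach O u w) : (assemble (O, B)).2 w = true :=
    boolOf_eq_true.2 (clusterRep_eq_clusterRep_iff.2 hw ▸ hB)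
  refine ⟨hblack (.refl O u), ?_⟩
  induction h with
  | refl => exact .refl
  | tail hb hbc ih => exact ih.tail ⟨hbc.sqAdj, hblack hb, hblack (hb.tail hbc)⟩

lemma sizeE_eq_tsum (S : Set V) : sizeE S = ∑' v, S.indicator 1 v := by
  rw [sizeE, ← ENNReal.tsum_set_one, tsum_subtype S fun _ ↦ (1 : ℝ≥0∞)]
  rfl

lemma mul_measure_reach_le (r : I) (u v : V) :
    toNNReal r * 𝐏 {O | Reach O u v} ≤
      DaCMeasure SqAdj half r {ω | v ∈ monoCluster SqAdj ω.2 true u} := by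
  have hmeas := (measurable_set_iff.1 (measurable_monoCluster true u) v).setOf
  rw [dacMeasure_sqAdj, Measure.map_apply measurable_assemble hmeas,
    Measure.prod_apply (measurable_assemble hmeas), ← setLIntegral_const]
  refine le_trans ?_ (setLIntegral_le_lintegral {O | Reach O u v} _)
  refine setLIntegral_mono' (measurable_reach u v).setOf fun O hO ↦ ?_
  rw [← setBernoulli_mem r (clusterRep (edgeCfgOf O) u)]
  exact measure_mono fun B hB ↦ mem_monoCluster_assemble hO hB

lemma lintegral_sizeE_monoCluster_half_eq_top {r : I} (hr : 0 < r) :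
    ∫⁻ ω, sizeE (monoCluster SqAdj ω.2 true origin) ∂DaCMeasure SqAdj half r = ∞ := by
  have hmeas (v : V) : MeasurableSet {ω : Config | v ∈ monoCluster SqAdj ω.2 true origin} :=
    (measurable_set_iff.1 (measurable_monoCluster true origin) v).setOf
  refine top_le_iff.1 ?_
  calc ∞ = ∑' v, toNNReal r * 𝐏 {O | Reach O origin v} := by
        have hr' : (toNNReal r : ℝ≥0∞) ≠ 0 :=
          ENNReal.coe_ne_zero.2 fun h ↦ (Subtype.coe_lt_coe.2 hr).ne' (congrArg NNReal.toReal h)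
        rw [ENNReal.tsum_mul_left, origin, tsum_measure_reach, ENNReal.mul_top hr']
    _ ≤ ∑' v, DaCMeasure SqAdj half r {ω | v ∈ monoCluster SqAdj ω.2 true origin} :=
        ENNReal.tsum_le_tsum fun v ↦ mul_measure_reach_le r origin v
    _ = ∫⁻ ω, ∑' v, {ω : Config | v ∈ monoCluster SqAdj ω.2 true origin}.indicator 1 ω
          ∂DaCMeasure SqAdj half r := by
        rw [lintegral_tsum fun v ↦ (measurable_one.indicator (hmeas v)).aemeasurable]
        simp only [lintegral_indicator_one (hmeas _)]
    _ = ∫⁻ ω, sizeE (monoCluster SqAdj ω.2 true origin) ∂DaCMeasure SqAdj half r := by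
        simp only [sizeE_eq_tsum]
        rfl

/-- At `p = 1/2`, for every `r ∈ (0,1)` there is no black percolation,
`Θ(1/2,r) = 0`, yet the mean size of the black `r`-cluster of the origin is
infinite. -/
theorem critical_segment (r : ℝ) (hr : r ∈ Set.Ioo (0 : ℝ) 1) :
    thetaSq (1 / 2) r = 0 ∧
    (∫⁻ ω, sizeE (monoCluster SqAdj ω.2 true origin)
        ∂(DaCMeasure SqAdj (1 / 2) r)) = ⊤ := by
  lift r to I using ⟨hr.1.le, hr.2.le⟩
  exact ⟨thetaSq_half_eq_zero hr.2, lintegral_sizeE_monoCluster_half_eq_top hr.1⟩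

end DaC
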